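/- arXiv:2411.01323 — 3 statements merged into one kernel-verified Lean document; each statement's English description precedes it below -/
import Mathlib

section
/- Let K be a field and let P, G be n × n matrices over K with PG = GPᵀ. If P is cyclic (its minimal polynomial equals its characteristic polynomial), then G is symmetric, i.e., G = Gᵀ. -/
open Polynomial Module

namespace Biref

variable {K V : Type*} [Field K] [AddCommGroup V] [Module K V]

/-- The orthogonal group of a bilinear form: all linear automorphisms preserving `f`. -/
def orthGroup (f : LinearMap.BilinForm K V) : Subgroup (V ≃ₗ[K] V) where
  carrier := {φ | ∀ x y : V, f (φ x) (φ y) = f x y}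
  one_mem' := fun _ _ => rfl
  mul_mem' := by
    intro a b ha hb x y
    simpa using (ha (b x) (b y)).trans (hb x y)
  inv_mem' := by
    intro a ha x y
    show f (a.symm x) (a.symm y) = f x y
    conv_rhs => rw [← a.apply_symm_apply x, ← a.apply_symm_apply y]
    exact (ha _ _).symm

/-- The special orthogonal group: isometries of determinant 1. -/
def specialOrthGroup (f : LinearMap.BilinForm K V) : Subgroup (V ≃ₗ[K] V) where
  carrier := {φ | (∀ x y : V, f (φ x) (φ y) = f x y) ∧
      LinearMap.det (φ : V →ₗ[K] V) = 1}
  one_mem' := ⟨fun _ _ => rfl, by simp⟩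
  mul_mem' := by
    rintro a b ⟨ha, ha'⟩ ⟨hb, hb'⟩
    refine ⟨fun x y => by simpa using (ha (b x) (b y)).trans (hb x y), ?_⟩
    rw [LinearEquiv.coe_toLinearMap_mul, map_mul, ha', hb', one_mul]
  inv_mem' := by
    rintro a ⟨ha, ha'⟩
    refine ⟨fun x y => ?_, ?_⟩
    · show f (a.symm x) (a.symm y) = f x y
      conv_rhs => rw [← a.apply_symm_apply x, ← a.apply_symm_apply y]
      exact (ha _ _).symm
    · have h1 : LinearMap.det ((a⁻¹ * a : V ≃ₗ[K] V) : V →ₗ[K] V) = 1 := by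
        rw [inv_mul_cancel, LinearEquiv.coe_toLinearMap_one, LinearMap.det_id]
      rw [LinearEquiv.coe_toLinearMap_mul, map_mul, ha', mul_one] at h1
      exact h1

/-- The commutator subgroup `Ω(V)` of the orthogonal group. -/
def omegaGroup (f : LinearMap.BilinForm K V) : Subgroup (V ≃ₗ[K] V) :=
  ⁅orthGroup f, orthGroup f⁆

/-- `g` is a product of two involutions lying in the subgroup `H`. -/
def IsBireflectionalIn {G : Type*} [Group G] (H : Subgroup G) (g : G) : Prop :=
  ∃ σ τ : G, σ ∈ H ∧ τ ∈ H ∧ σ ^ 2 = 1 ∧ τ ^ 2 = 1 ∧ g = σ * τ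

/-- `g` is bireflectional in the group `G`. -/
def IsBireflectional {G : Type*} [Group G] (g : G) : Prop :=
  ∃ σ τ : G, σ ^ 2 = 1 ∧ τ ^ 2 = 1 ∧ g = σ * τ

/-- `g` is reversed by some element of `H`. -/
def IsReversibleIn {G : Type*} [Group G] (H : Subgroup G) (g : G) : Prop :=
  ∃ α : G, α ∈ H ∧ α * g * α⁻¹ = g⁻¹

/-- A subspace is invariant under an endomorphism. -/
def Invt (ψ : V →ₗ[K] V) (U : Submodule K V) : Prop :=
  ∀ x ∈ U, ψ x ∈ U

/-- The discriminant of a (finite-dimensional, nondegenerate) bilinear space is the class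
of `d` in `K*/(K*)²`: some Gram determinant equals `d` times a nonzero square. -/
def HasDisc (f : LinearMap.BilinForm K V) (d : K) : Prop :=
  ∃ (b : Basis (Fin (Module.finrank K V)) K V) (c : Kˣ),
    (Matrix.of fun i j => f (b i) (b j)).det = d * (c : K) ^ 2

/-- A nondegenerate symmetric bilinear space is hyperbolic iff its Witt index is half its
dimension, i.e. there is a totally isotropic subspace of half the dimension. -/
def IsHyperbolicSpace (f : LinearMap.BilinForm K V) : Prop :=
  ∃ W : Submodule K V, (∀ x ∈ W, ∀ y ∈ W, f x y = 0) ∧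
    2 * Module.finrank K W = Module.finrank K V

/-- The multiplicity of `p ^ d` as an elementary divisor of `φ`. -/
noncomputable def edMult (φ : Module.End K V) (p : K[X]) (d : ℕ) : ℕ :=
  (2 * Module.finrank K (LinearMap.ker (Polynomial.aeval φ p ^ d))
    - Module.finrank K (LinearMap.ker (Polynomial.aeval φ p ^ (d + 1)))
    - Module.finrank K (LinearMap.ker (Polynomial.aeval φ p ^ (d - 1)))) / p.natDegree

/-- `n_j(φ)`: the number of elementary divisors `(x ± 1) ^ d` of `φ` with `d ≡ j mod 8`,
counted with multiplicity. -/
noncomputable def nPM [FiniteDimensional K V] (φ : Module.End K V) (j : ℕ) : ℕ :=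
  ∑ d ∈ Finset.range (Module.finrank K V + 1),
    if d % 8 = j % 8 then edMult φ (X - 1) d + edMult φ (X + 1) d else 0

/-- The Fitting one space `Bahn^∞(ψ) = ⋂ⱼ im (ψ - 1)^j`. -/
noncomputable def bahnInf (ψ : Module.End K V) : Submodule K V :=
  ⨅ j : ℕ, LinearMap.range ((ψ - 1) ^ j)

/-- The `K[x]`-submodule generated by `v` (`x` acting as `ψ`). -/
def cycSub (ψ : Module.End K V) (v : V) : Submodule K V :=
  Submodule.span K (Set.range fun n : ℕ => (ψ ^ n) v)

/-- `V` is a cyclic `K[x]`-module, `x` acting as `ψ`. -/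
def IsCyclicEnd (ψ : Module.End K V) : Prop :=
  ∃ v : V, cycSub ψ v = ⊤

/-- `V` is a direct sum of two cyclic `K[x]`-submodules, `x` acting as `ψ`. -/
def IsBicyclicEnd (ψ : Module.End K V) : Prop :=
  ∃ v w : V, cycSub ψ v ⊓ cycSub ψ w = ⊥ ∧ cycSub ψ v ⊔ cycSub ψ w = ⊤

/-- `V` is an indecomposable `K[x]`-module, `x` acting as `ψ`. -/
def ModIndec (ψ : Module.End K V) : Prop :=
  (⊥ : Submodule K V) ≠ ⊤ ∧
    ¬∃ A B : Submodule K V, Invt ψ A ∧ Invt ψ B ∧ A ≠ ⊥ ∧ B ≠ ⊥ ∧ A ⊓ B = ⊥ ∧ A ⊔ B = ⊤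

/-- `ψ` is orthogonally indecomposable w.r.t. `f`: `V ≠ 0` and the only nondegenerate
invariant subspaces are `0` and `V`. -/
def OrthIndec (f : LinearMap.BilinForm K V) (ψ : Module.End K V) : Prop :=
  (⊥ : Submodule K V) ≠ ⊤ ∧
    ∀ U : Submodule K V, Invt ψ U → (f.restrict U).Nondegenerate → U = ⊥ ∨ U = ⊤

/-- The Witt index: the dimension of a maximal totally isotropic subspace. -/
noncomputable def wittIndex (f : LinearMap.BilinForm K V) : ℕ :=
  sSup {n | ∃ W : Submodule K V, (∀ x ∈ W, ∀ y ∈ W, f x y = 0) ∧ Module.finrank K W = n}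

/-!
For `Q = Pᵀ` the bilinear form `(x, y) ↦ xᵀ G y` satisfies `⟨Q x, y⟩ = ⟨x, Q y⟩`. Since `Q` has the
same minimal and characteristic polynomials as `P`, it has a cyclic vector `v`, and on the spanning
family `Q ^ i v` the form takes the values `⟨Q ^ i v, Q ^ j v⟩ = ⟨v, Q ^ (i + j) v⟩`, which are
symmetric in `i` and `j`.
-/

section SelfAdjoint

variable {R M : Type*} [CommSemiring R] [AddCommMonoid M] [Module R M]
  {B : LinearMap.BilinForm R M} {φ : Module.End R M}

theorem isSelfAdjoint_pow (hφ : B.IsSelfAdjoint φ) (k : ℕ) :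
    B.IsSelfAdjoint (φ ^ k : Module.End R M) := by
  induction k with
  | zero => exact LinearMap.isAdjointPair_one
  | succ k ih =>
    have h := LinearMap.IsAdjointPair.mul ih hφ
    rwa [← pow_succ, ← pow_succ'] at h

theorem apply_pow_apply_pow_of_isSelfAdjoint (hφ : B.IsSelfAdjoint φ) (v : M) (i j : ℕ) :
    B ((φ ^ i) v) ((φ ^ j) v) = B v ((φ ^ (i + j)) v) := by
  rw [isSelfAdjoint_pow hφ i, ← Module.End.mul_apply, ← pow_add]

theorem isSymm_of_isSelfAdjoint_of_span_pow_eq_top (hφ : B.IsSelfAdjoint φ) {v : M}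
    (hv : Submodule.span R (Set.range fun k : ℕ => (φ ^ k) v) = ⊤) : B.IsSymm := by
  rw [LinearMap.BilinForm.isSymm_iff, LinearMap.isSymm_iff_eq_flip]
  refine LinearMap.ext_on_range hv fun i => LinearMap.ext_on_range hv fun j => ?_
  rw [LinearMap.flip_apply, apply_pow_apply_pow_of_isSelfAdjoint hφ,
    apply_pow_apply_pow_of_isSelfAdjoint hφ, add_comm]

end SelfAdjoint

section CyclicVector

theorem linearIndependent_pow_apply {φ : Module.End K V} {v : V}
    (hv : ∀ p : K[X], aeval φ p v = 0 → aeval φ p = 0) :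
    LinearIndependent K fun i : Fin (minpoly K φ).natDegree => (φ ^ (i : ℕ)) v := by
  refine (linearIndependent_pow φ).map (f := (LinearMap.applyₗ v : Module.End K V →ₗ[K] V)) ?_
  rw [Submodule.disjoint_def]
  intro ψ hψ hψv
  have hadjoin : ψ ∈ Algebra.adjoin K {φ} := by
    refine Submodule.span_le (p := (Algebra.adjoin K {φ}).toSubmodule).2 ?_ hψ
    rintro _ ⟨i, rfl⟩
    exact pow_mem (Algebra.self_mem_adjoin_singleton K φ) i
  obtain ⟨p, rfl⟩ := Algebra.adjoin_singleton_eq_range_aeval K φ ▸ hadjoin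
  exact hv p hψv

variable [FiniteDimensional K V]

theorem exists_forall_aeval_eq_zero_of_aeval_apply_eq_zero (φ : Module.End K V) :
    ∃ v : V, ∀ p : K[X], aeval φ p v = 0 → aeval φ p = 0 := by
  obtain ⟨x, hx⟩ := exists_ker_toSpanSingleton_eq_annihilator K[X] (AEval' φ)
  refine ⟨(AEval'.of φ).symm x, fun p hp => ?_⟩
  have hpx : p ∈ LinearMap.ker (LinearMap.toSpanSingleton K[X] _ x) := by
    rw [LinearMap.mem_ker, LinearMap.toSpanSingleton_apply,
      ← (AEval'.of φ).symm.map_eq_zero_iff, AEval.of_symm_smul]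
    exact hp
  rw [hx, AEval.annihilator_eq_ker_aeval] at hpx
  exact hpx

theorem isCyclicEnd_of_minpoly_eq_charpoly {φ : Module.End K V}
    (hφ : minpoly K φ = φ.charpoly) : IsCyclicEnd φ := by
  obtain ⟨v, hv⟩ := exists_forall_aeval_eq_zero_of_aeval_apply_eq_zero φ
  have hcard : Fintype.card (Fin (minpoly K φ).natDegree) = finrank K V := by
    rw [Fintype.card_fin, hφ, LinearMap.charpoly_natDegree]
  have hspan := (linearIndependent_pow_apply hv).span_eq_top_of_card_eq_finrank' hcard
  refine ⟨v, top_unique (hspan ▸ Submodule.span_mono ?_)⟩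
  rintro _ ⟨i, rfl⟩
  exact ⟨i, rfl⟩

end CyclicVector

section Transpose

variable {R A : Type*} [CommRing R] [Ring A] [Algebra R A]

theorem isIntegral_op_iff {a : A} : IsIntegral R (MulOpposite.op a) ↔ IsIntegral R a := by
  simp only [IsIntegral, RingHom.IsIntegralElem, ← aeval_def, aeval_op_apply,
    MulOpposite.op_eq_zero_iff]

variable (R) in
theorem minpoly_op (a : A) : minpoly R (MulOpposite.op a) = minpoly R a := by
  classical
  simp_rw [minpoly, isIntegral_op_iff, ← aeval_def, aeval_op_apply, MulOpposite.op_eq_zero_iff]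

open Matrix in
theorem minpoly_transpose {m : Type*} [Fintype m] [DecidableEq m] (M : Matrix m m R) :
    minpoly R Mᵀ = minpoly R M :=
  calc minpoly R Mᵀ
    _ = minpoly R (MulOpposite.op Mᵀ) := (minpoly_op R Mᵀ).symm
    _ = minpoly R M := minpoly.algEquiv_eq (transposeAlgEquiv m R R) M

end Transpose

open Matrix in
/-- If `P G = G Pᵀ` and `P` is cyclic (minimal polynomial equals
characteristic polynomial), then `G` is symmetric. -/
theorem stmt17 {n : ℕ} (P G : Matrix (Fin n) (Fin n) K)
    (h : P * G = G * Pᵀ) (hcyc : minpoly K P = P.charpoly) :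
    G = Gᵀ := by
  have hself : (toBilin' G).IsSelfAdjoint (toLin' Pᵀ) :=
    (isAdjointPair_toLinearMap₂' G G Pᵀ Pᵀ).2 (by rwa [IsAdjointPair, transpose_transpose])
  have hminpoly : minpoly K (toLin' Pᵀ) = (toLin' Pᵀ).charpoly := by
    rw [minpoly_toLin', charpoly_toLin', minpoly_transpose, charpoly_transpose, hcyc]
  obtain ⟨v, hv⟩ := isCyclicEnd_of_minpoly_eq_charpoly hminpoly
  have hsymm : (toBilin' G).IsSymm := isSymm_of_isSelfAdjoint_of_span_pow_eq_top hself hv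
  exact (isSymm_toBilin'_iff_isSymm.1 hsymm).eq.symm

end Biref
end

section
/- Let K be a field with char K ≠ 2, W a finite-dimensional vector space over K, φ ∈ GL(W), and σ ∈ GL(W) an involution with σφσ⁻¹ = φ⁻¹. Then W = W₁ ⊕ … ⊕ W_m, where each W_j is invariant under both φ and σ, and each W_j either is indecomposable as a K[x]-module (x acting as φ), or satisfies W_j = X_j ⊕ X_jσ for some φ-invariant subspace X_j that is indecomposable as a K[x]-module. -/
open Polynomial Module

namespace Biref

variable {K V : Type*} [Field K] [AddCommGroup V] [Module K V]

/-!
Split `W` into subspaces that admit no proper decomposition into `φ`- and `σ`-invariant summands;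
the claim then concerns a single such piece `M`. Suppose `M = X ⊕ Y` with `X`, `Y` nonzero and
`φ`-invariant, let `e` be the projection onto `X` along `Y` and put `f = σeσ`, an idempotent with
range `σX`. Since `σ` reverses `φ`, the sum `a = e + f` commutes with `φ` and `σ`, so by Fitting's
lemma `a` and `2 - a = (1 - e) + (1 - f)` are each nilpotent or invertible. As `2` is invertible,
a sum of two idempotents is nilpotent only if both vanish; hence `a` and `2 - a` are invertible,
and so is `e - f`, because `(e - f)² = a (2 - a)`. This means `M = X ⊕ σX`. As this holds for
*every* proper `φ`-invariant summand `X`, the modular law makes each such `X` indecomposable.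
-/

section Lattice

variable {α : Type*}

/-- The element `a` of `S` is nonzero and is not the internal direct sum of two nonzero elements
of `S`. For `S` the lattice of submodules invariant under some endomorphisms, this is
indecomposability as a module over the algebra that they generate. -/
def IsIndecIn [Lattice α] [OrderBot α] (S : Set α) (a : α) : Prop :=
  a ∈ S ∧ a ≠ ⊥ ∧ ∀ b ∈ S, ∀ c ∈ S, Disjoint b c → b ⊔ c = a → b = ⊥ ∨ c = ⊥

theorem exists_disjoint_sup_eq_of_not_isIndecIn [Lattice α] [OrderBot α] {S : Set α} {a : α}
    (ha : a ∈ S) (ha₀ : a ≠ ⊥) (h : ¬IsIndecIn S a) :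
    ∃ b ∈ S, ∃ c ∈ S, Disjoint b c ∧ b ⊔ c = a ∧ b ≠ ⊥ ∧ c ≠ ⊥ := by
  simpa only [IsIndecIn, ha, ha₀, ne_eq, not_false_eq_true, true_and, not_forall, not_or,
    exists_prop] using h

theorem exists_finset_supIndep_isIndecIn [Lattice α] [IsModularLattice α] [OrderBot α]
    [WellFoundedLT α] {S : Set α} {a : α} (ha : a ∈ S) :
    ∃ t : Finset α, t.SupIndep id ∧ t.sup id = a ∧ ∀ b ∈ t, IsIndecIn S b := by
  classical
  induction a using WellFoundedLT.induction with
  | ind a ih =>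
    by_cases ha₀ : a = ⊥
    · exact ⟨∅, Finset.supIndep_empty _, ha₀.symm, by simp⟩
    by_cases hind : IsIndecIn S a
    · exact ⟨{a}, Finset.supIndep_singleton _ _, Finset.sup_singleton, by simpa using hind⟩
    obtain ⟨b, hb, c, hc, hbc, rfl, hb₀, hc₀⟩ :=
      exists_disjoint_sup_eq_of_not_isIndecIn ha ha₀ hind
    have b_lt : b < b ⊔ c := left_lt_sup.2 fun hcb => hc₀ (hbc.eq_bot_of_ge hcb)
    have c_lt : c < b ⊔ c := right_lt_sup.2 fun hbc' => hb₀ (hbc.eq_bot_of_le hbc')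
    obtain ⟨s, hs, rfl, hs'⟩ := ih b b_lt hb
    obtain ⟨t, ht, rfl, ht'⟩ := ih c c_lt hc
    exact ⟨s ∪ t, hs.union ht hbc, Finset.sup_union,
      fun d hd => (Finset.mem_union.1 hd).elim (hs' d) (ht' d)⟩

theorem exists_fin_iSupIndep_isIndecIn [CompleteLattice α] [IsModularLattice α] [WellFoundedLT α]
    {S : Set α} {a : α} (ha : a ∈ S) :
    ∃ (m : ℕ) (u : Fin m → α), iSupIndep u ∧ ⨆ i, u i = a ∧ ∀ i, IsIndecIn S (u i) := by
  obtain ⟨t, ht, rfl, ht'⟩ := exists_finset_supIndep_isIndecIn ha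
  let enum := t.equivFin.symm
  refine ⟨t.card, fun i => enum i, ?_, ?_, fun i => ht' _ (enum i).2⟩
  · exact (iSupIndep_comp_coe_iff_supIndep.2 ht).comp enum.injective
  · rw [enum.iSup_comp (g := fun b : t => (b : α)), Finset.sup_id_eq_sSup, sSup_eq_iSup']
    rfl

end Lattice

section Idempotents

variable {A : Type*} [Ring A] {e f : A}

theorem sub_mul_sub_self_of_isIdempotentElem (he : IsIdempotentElem e)
    (hf : IsIdempotentElem f) : (e - f) * (e - f) = (e + f) * (2 - (e + f)) := by
  simp only [mul_sub, sub_mul, mul_add, add_mul, he.eq, hf.eq, mul_two]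
  abel

theorem semiconjBy_sub_of_isIdempotentElem (he : IsIdempotentElem e)
    (hf : IsIdempotentElem f) : SemiconjBy (e - f) (2 - (e + f)) (e + f) := by
  simp only [SemiconjBy, mul_sub, sub_mul, mul_add, add_mul, he.eq, hf.eq, mul_two]
  abel

theorem eq_zero_of_isNilpotent_add (h2 : IsUnit (2 : A)) (he : IsIdempotentElem e)
    (hf : IsIdempotentElem f) (h : IsNilpotent (e + f)) : e = 0 := by
  have unit_two_sub : IsUnit (2 - (e + f)) := by
    rw [sub_eq_add_neg]
    exact h.neg.isUnit_add_left_of_commute h2 (Commute.ofNat_right _ 2)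
  obtain ⟨n, hn⟩ := h
  have e_eq_f : e = f := by
    have sub_mul_pow : (e - f) * (2 - (e + f)) ^ n = 0 := by
      rw [((semiconjBy_sub_of_isIdempotentElem he hf).pow_right n).eq, hn, zero_mul]
    exact sub_eq_zero.1 ((unit_two_sub.pow n).mul_left_eq_zero.1 sub_mul_pow)
  have two_pow_mul : (2 : A) ^ (n + 1) * e = 0 := by
    have pow_succ_eq : (e + f) ^ (n + 1) = 2 ^ (n + 1) * e := by
      rw [← e_eq_f, ← two_mul, (Commute.ofNat_left 2 e).mul_pow, he.pow_succ_eq]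
    rw [← pow_succ_eq, pow_succ, hn, zero_mul]
  exact (h2.pow _).mul_right_eq_zero.1 two_pow_mul

theorem isUnit_sub_of_isUnit_add (he : IsIdempotentElem e) (hf : IsIdempotentElem f)
    (hadd : IsUnit (e + f)) (hsub : IsUnit (2 - (e + f))) : IsUnit (e - f) := by
  rw [← isUnit_mul_self_iff, sub_mul_sub_self_of_isIdempotentElem he hf]
  exact hadd.mul hsub

end Idempotents

section Endomorphisms

variable {R M : Type*} [Ring R] [AddCommGroup M] [Module R M]

theorem isUnit_two_end (h2 : IsUnit (2 : R)) : IsUnit (2 : End R M) := by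
  rw [Module.End.isUnit_iff]
  have two_eq_smul : ⇑(2 : End R M) = fun x => (2 : R) • x := by
    ext x
    rw [Module.End.ofNat_apply, ofNat_smul_eq_nsmul R]
  exact two_eq_smul ▸ h2.smul_bijective

theorem isCompl_range_of_isUnit_sub {e f : End R M} (he : IsIdempotentElem e)
    (hf : IsIdempotentElem f) (h : IsUnit (e - f)) :
    IsCompl (LinearMap.range e) (LinearMap.range f) := by
  obtain ⟨inj, surj⟩ := (Module.End.isUnit_iff _).1 h
  constructor
  · rw [Submodule.disjoint_def]
    intro x hxe hxf
    rw [LinearMap.IsIdempotentElem.mem_range_iff he] at hxe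
    rw [LinearMap.IsIdempotentElem.mem_range_iff hf] at hxf
    exact (map_eq_zero_iff _ inj).1 (by rw [LinearMap.sub_apply, hxe, hxf, sub_self])
  · rw [codisjoint_iff, eq_top_iff]
    intro y _
    obtain ⟨z, rfl⟩ := surj y
    exact sub_mem (Submodule.mem_sup_left ⟨z, rfl⟩) (Submodule.mem_sup_right ⟨z, rfl⟩)

theorem ker_mem_invtSubmodule_of_commute {T ψ : End R M} (h : Commute T ψ) :
    LinearMap.ker T ∈ ψ.invtSubmodule := by
  intro x hx
  rw [LinearMap.mem_ker] at hx
  rw [Submodule.mem_comap, LinearMap.mem_ker, ← Module.End.mul_apply, h.eq, Module.End.mul_apply,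
    hx, map_zero]

theorem range_mem_invtSubmodule_of_commute {T ψ : End R M} (h : Commute T ψ) :
    LinearMap.range T ∈ ψ.invtSubmodule := by
  rintro _ ⟨x, rfl⟩
  exact ⟨ψ x, LinearMap.congr_fun h.eq x⟩

theorem IsIndecIn.isNilpotent_or_isUnit [IsArtinian R M] [IsNoetherian R M]
    {S : Set (Submodule R M)} (hS : IsIndecIn S ⊤) {T : End R M}
    (hker : ∀ n, LinearMap.ker (T ^ n) ∈ S) (hrange : ∀ n, LinearMap.range (T ^ n) ∈ S) :
    IsNilpotent T ∨ IsUnit T := by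
  obtain ⟨n, hn, hn₀⟩ :=
    (T.eventually_isCompl_ker_pow_range_pow.and (Filter.eventually_ne_atTop 0)).exists
  rcases hS.2.2 _ (hker n) _ (hrange n) hn.disjoint hn.sup_eq_top with ker_eq | range_eq
  · right
    rw [← isUnit_pow_iff hn₀, Module.End.isUnit_iff]
    exact IsArtinian.bijective_of_injective_endomorphism _ (LinearMap.ker_eq_bot.1 ker_eq)
  · exact .inl ⟨n, LinearMap.range_eq_bot.1 range_eq⟩

theorem IsIndecIn.isNilpotent_or_isUnit_of_commute [IsArtinian R M] [IsNoetherian R M]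
    {φ σ T : End R M}
    (h : IsIndecIn (φ.invtSubmodule ∩ σ.invtSubmodule) (⊤ : Submodule R M))
    (hφ : Commute T φ) (hσ : Commute T σ) : IsNilpotent T ∨ IsUnit T :=
  h.isNilpotent_or_isUnit
    (fun n => ⟨ker_mem_invtSubmodule_of_commute (hφ.pow_left n),
      ker_mem_invtSubmodule_of_commute (hσ.pow_left n)⟩)
    (fun n => ⟨range_mem_invtSubmodule_of_commute (hφ.pow_left n),
      range_mem_invtSubmodule_of_commute (hσ.pow_left n)⟩)

end Endomorphisms

section ReversingInvolution

theorem conj_mul_conj {A : Type*} [Monoid A] {σ : A} (hσ : σ * σ = 1) (x y : A) :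
    σ * x * σ * (σ * y * σ) = σ * (x * y) * σ := by
  rw [mul_assoc, ← mul_assoc σ (σ * y), ← mul_assoc σ σ y, hσ, one_mul]
  simp only [mul_assoc]

theorem commute_conj_of_reverses {A : Type*} [Monoid A] {φ σ e : A} (hσ : σ * σ = 1)
    (hrev : φ * σ * φ = σ) (he : Commute e φ) : Commute (σ * e * σ) φ := by
  have mul_σφσ : φ * (σ * φ * σ) = 1 := by rw [← hσ, ← mul_assoc, ← mul_assoc, hrev]
  have σφσ_mul : σ * φ * σ * φ = 1 := by rw [mul_assoc, mul_assoc, ← mul_assoc φ, hrev, hσ]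
  let u : Aˣ := ⟨φ, σ * φ * σ, mul_σφσ, σφσ_mul⟩
  have comm : Commute (σ * e * σ) (σ * φ * σ) := by
    rw [Commute, SemiconjBy, conj_mul_conj hσ, conj_mul_conj hσ, he.eq]
  exact Commute.units_inv_right_iff (u := u).1 comm

theorem commute_add_conj {A : Type*} [Semiring A] {σ : A} (hσ : σ * σ = 1) (e : A) :
    Commute (e + σ * e * σ) σ := by
  rw [Commute, SemiconjBy, add_mul, mul_add, mul_assoc _ σ σ, hσ, mul_one, ← mul_assoc,
    ← mul_assoc, hσ, one_mul, add_comm]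

theorem isIdempotentElem_conj {A : Type*} [Monoid A] {σ e : A} (hσ : σ * σ = 1)
    (he : IsIdempotentElem e) : IsIdempotentElem (σ * e * σ) := by
  rw [IsIdempotentElem, conj_mul_conj hσ, he.eq]

variable {R M : Type*} [Ring R] [AddCommGroup M] [Module R M]

theorem range_conj {σ : End R M} (hσ : σ * σ = 1) (e : End R M) :
    LinearMap.range (σ * e * σ) = (LinearMap.range e).map σ := by
  have surj : Function.Surjective σ := fun x => ⟨σ x, LinearMap.congr_fun hσ x⟩
  rw [Module.End.mul_eq_comp,
    LinearMap.range_comp_of_range_eq_top _ (LinearMap.range_eq_top.2 surj),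
    Module.End.mul_eq_comp, LinearMap.range_comp]

variable [IsArtinian R M] [IsNoetherian R M] {φ σ : End R M}

theorem isUnit_sub_conj_of_isIndecIn (h2 : IsUnit (2 : R)) (hσ : σ * σ = 1)
    (hrev : φ * σ * φ = σ)
    (h : IsIndecIn (φ.invtSubmodule ∩ σ.invtSubmodule) (⊤ : Submodule R M)) {e : End R M}
    (he : IsIdempotentElem e) (heφ : Commute e φ) (he₀ : e ≠ 0) (he₁ : e ≠ 1) :
    IsUnit (e - σ * e * σ) := by
  have h2' : IsUnit (2 : End R M) := isUnit_two_end h2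
  have hf : IsIdempotentElem (σ * e * σ) := isIdempotentElem_conj hσ he
  have comm_φ : Commute (e + σ * e * σ) φ := heφ.add_left (commute_conj_of_reverses hσ hrev heφ)
  have comm_σ : Commute (e + σ * e * σ) σ := commute_add_conj hσ e
  refine isUnit_sub_of_isUnit_add he hf ?_ ?_
  · refine (h.isNilpotent_or_isUnit_of_commute comm_φ comm_σ).resolve_left fun nil => he₀ ?_
    exact eq_zero_of_isNilpotent_add h2' he hf nil
  · refine (h.isNilpotent_or_isUnit_of_commute ((Commute.ofNat_left 2 φ).sub_left comm_φ)
      ((Commute.ofNat_left 2 σ).sub_left comm_σ)).resolve_left fun nil => he₁ ?_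
    have two_sub : 2 - (e + σ * e * σ) = (1 - e) + (1 - σ * e * σ) := by
      rw [← one_add_one_eq_two, add_sub_add_comm]
    rw [two_sub] at nil
    exact (sub_eq_zero.1 (eq_zero_of_isNilpotent_add h2' he.one_sub hf.one_sub nil)).symm

theorem isCompl_map_of_isIndecIn (h2 : IsUnit (2 : R)) (hσ : σ * σ = 1) (hrev : φ * σ * φ = σ)
    (h : IsIndecIn (φ.invtSubmodule ∩ σ.invtSubmodule) (⊤ : Submodule R M))
    {X Y : Submodule R M} (hX : X ∈ φ.invtSubmodule) (hY : Y ∈ φ.invtSubmodule)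
    (hXY : IsCompl X Y) (hX₀ : X ≠ ⊥) (hY₀ : Y ≠ ⊥) : IsCompl X (X.map σ) := by
  let e : End R M := X.projection Y hXY
  have range_e : LinearMap.range e = X := Submodule.range_projection hXY
  have ker_e : LinearMap.ker e = Y := Submodule.ker_projection hXY
  have he : IsIdempotentElem e := Submodule.isIdempotentElem_projection hXY
  have heφ : Commute e φ :=
    (LinearMap.IsIdempotentElem.commute_iff he).2 ⟨by rwa [range_e], by rwa [ker_e]⟩
  have he₀ : e ≠ 0 := fun h₀ => hX₀ (by rw [← range_e, h₀, LinearMap.range_zero])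
  have he₁ : e ≠ 1 := fun h₁ => hY₀ (by rw [← ker_e, h₁, Module.End.one_eq_id, LinearMap.ker_id])
  have unit_sub : IsUnit (e - σ * e * σ) :=
    isUnit_sub_conj_of_isIndecIn h2 hσ hrev h he heφ he₀ he₁
  have compl := isCompl_range_of_isUnit_sub he (isIdempotentElem_conj hσ he) unit_sub
  rwa [range_conj hσ, range_e] at compl

theorem isIndecIn_of_isCompl (h2 : IsUnit (2 : R)) (hσ : σ * σ = 1) (hrev : φ * σ * φ = σ)
    (h : IsIndecIn (φ.invtSubmodule ∩ σ.invtSubmodule) (⊤ : Submodule R M))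
    {X Y : Submodule R M} (hX : X ∈ φ.invtSubmodule) (hY : Y ∈ φ.invtSubmodule)
    (hXY : IsCompl X Y) (hX₀ : X ≠ ⊥) (hY₀ : Y ≠ ⊥) :
    IsIndecIn φ.invtSubmodule X := by
  refine ⟨hX, hX₀, fun A hA B hB hAB hsup => or_iff_not_imp_left.2 fun hA₀ => ?_⟩
  have compl_X : IsCompl X (X.map σ) := isCompl_map_of_isIndecIn h2 hσ hrev h hX hY hXY hX₀ hY₀
  have compl_A : IsCompl A (A.map σ) := by
    refine isCompl_map_of_isIndecIn h2 hσ hrev h hA (φ.invtSubmodule.sup_mem hB hY) ⟨?_, ?_⟩ hA₀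
      fun hBY => hY₀ (sup_eq_bot_iff.1 hBY).2
    · exact hAB.disjoint_sup_right_of_disjoint_sup_left (hsup.symm ▸ hXY.disjoint)
    · rw [codisjoint_iff, ← sup_assoc, hsup, hXY.sup_eq_top]
  have A_le : A ≤ X := hsup ▸ le_sup_left
  have A_eq : A = X := by
    refine eq_of_le_of_inf_le_of_sup_le A_le (z := X.map σ) ?_ ?_
    · rw [compl_X.inf_eq_bot]
      exact bot_le
    · exact le_top.trans (compl_A.sup_eq_top.ge.trans (sup_le_sup_left (Submodule.map_mono A_le) A))
  exact hAB.eq_bot_of_ge (A_eq ▸ hsup ▸ le_sup_right)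

theorem isIndecIn_top_or_exists_isCompl_map (h2 : IsUnit (2 : R)) (hσ : σ * σ = 1)
    (hrev : φ * σ * φ = σ)
    (h : IsIndecIn (φ.invtSubmodule ∩ σ.invtSubmodule) (⊤ : Submodule R M)) :
    IsIndecIn φ.invtSubmodule (⊤ : Submodule R M) ∨
      ∃ X : Submodule R M, IsIndecIn φ.invtSubmodule X ∧ IsCompl X (X.map σ) := by
  refine or_iff_not_imp_left.2 fun hnot => ?_
  obtain ⟨X, hX, Y, hY, hXY, hsup, hX₀, hY₀⟩ :=
    exists_disjoint_sup_eq_of_not_isIndecIn h.1.1 h.2.1 hnot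
  have compl : IsCompl X Y := ⟨hXY, codisjoint_iff.2 hsup⟩
  exact ⟨X, isIndecIn_of_isCompl h2 hσ hrev h hX hY compl hX₀ hY₀,
    isCompl_map_of_isIndecIn h2 hσ hrev h hX hY compl hX₀ hY₀⟩

end ReversingInvolution

section Restriction

variable {R M : Type*} [Ring R] [AddCommGroup M] [Module R M]

theorem isIndecIn_map_subtype_iff {S : Set (Submodule R M)} {U : Submodule R M}
    {N : Submodule R U} :
    IsIndecIn S (N.map U.subtype) ↔ IsIndecIn (Submodule.map U.subtype ⁻¹' S) N := by
  have inj := Submodule.map_injective_of_injective U.subtype_injective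
  have map_eq_bot (P : Submodule R U) : P.map U.subtype = ⊥ ↔ P = ⊥ := by
    rw [← inj.eq_iff, Submodule.map_bot]
  have exists_map_eq {b : Submodule R M} (hb : b ≤ N.map U.subtype) :
      ∃ P : Submodule R U, P.map U.subtype = b :=
    ⟨_, Submodule.map_comap_eq_of_le (hb.trans LinearMap.map_le_range)⟩
  refine and_congr Iff.rfl (and_congr (map_eq_bot N).not ⟨fun h P hP Q hQ hPQ hsup => ?_,
    fun h b hb c hc hbc hsup => ?_⟩)
  · rw [← map_eq_bot P, ← map_eq_bot Q]
    exact h _ hP _ hQ (Submodule.disjoint_map U.subtype_injective hPQ)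
      (by rw [← Submodule.map_sup, hsup])
  · obtain ⟨P, rfl⟩ := exists_map_eq (hsup ▸ le_sup_left)
    obtain ⟨Q, rfl⟩ := exists_map_eq (hsup ▸ le_sup_right)
    rw [disjoint_iff, ← Submodule.map_inf _ U.subtype_injective, map_eq_bot] at hbc
    rw [← Submodule.map_sup] at hsup
    rw [map_eq_bot, map_eq_bot]
    exact h P hb Q hc (disjoint_iff.2 hbc) (inj hsup)

theorem preimage_map_subtype_invtSubmodule {φ : End R M} {U : Submodule R M}
    (hU : U ∈ φ.invtSubmodule) :
    Submodule.map U.subtype ⁻¹' φ.invtSubmodule =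
      (Module.End.invtSubmodule (φ.restrict hU) : Set (Submodule R U)) := by
  ext N
  refine ⟨fun hN x hx => ?_, Module.End.invtSubmodule.map_subtype_mem_of_mem_invtSubmodule φ hU⟩
  obtain ⟨y, hy, hyx⟩ := hN (Submodule.mem_map_of_mem hx)
  rwa [Submodule.mem_comap, ← U.subtype_injective (a₂ := φ.restrict hU x) hyx]

theorem isIndecIn_top_restrict_iff {φ : End R M} {U : Submodule R M}
    (hU : U ∈ φ.invtSubmodule) :
    IsIndecIn (Module.End.invtSubmodule (φ.restrict hU)) (⊤ : Submodule R U) ↔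
      IsIndecIn φ.invtSubmodule U := by
  rw [← preimage_map_subtype_invtSubmodule, ← isIndecIn_map_subtype_iff,
    Submodule.map_subtype_top]

end Restriction

section Decomposition

variable {R M : Type*} [Ring R] [AddCommGroup M] [Module R M] [IsArtinian R M] [IsNoetherian R M]

theorem IsIndecIn.isIndecIn_or_exists_sup_map_eq {φ σ : End R M} {U : Submodule R M}
    (h2 : IsUnit (2 : R)) (hσ : σ * σ = 1) (hrev : φ * σ * φ = σ)
    (h : IsIndecIn (φ.invtSubmodule ∩ σ.invtSubmodule) U) :
    IsIndecIn φ.invtSubmodule U ∨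
      ∃ X : Submodule R M, IsIndecIn φ.invtSubmodule X ∧ X ⊔ X.map σ = U ∧ X ⊓ X.map σ = ⊥ := by
  obtain ⟨hUφ, hUσ⟩ := h.1
  let φ' : End R U := φ.restrict hUφ
  let σ' : End R U := σ.restrict hUσ
  have hσ' : σ' * σ' = 1 := by
    ext x
    exact LinearMap.congr_fun hσ x
  have hrev' : φ' * σ' * φ' = σ' := by
    ext x
    exact LinearMap.congr_fun hrev x
  have h' : IsIndecIn (φ'.invtSubmodule ∩ σ'.invtSubmodule) (⊤ : Submodule R U) := by
    rwa [← preimage_map_subtype_invtSubmodule, ← preimage_map_subtype_invtSubmodule,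
      ← Set.preimage_inter, ← isIndecIn_map_subtype_iff, Submodule.map_subtype_top]
  refine (isIndecIn_top_or_exists_isCompl_map h2 hσ' hrev' h').imp
    (isIndecIn_top_restrict_iff hUφ).1 ?_
  rintro ⟨X, hX, hcompl⟩
  have map_map : (X.map U.subtype).map σ = (X.map σ').map U.subtype := by
    rw [← Submodule.map_comp, ← Submodule.map_comp]
    rfl
  refine ⟨X.map U.subtype, ?_, ?_, ?_⟩
  · rwa [isIndecIn_map_subtype_iff, preimage_map_subtype_invtSubmodule hUφ]
  · rw [map_map, ← Submodule.map_sup, hcompl.sup_eq_top, Submodule.map_subtype_top]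
  · rw [map_map, ← Submodule.map_inf _ U.subtype_injective, hcompl.inf_eq_bot, Submodule.map_bot]

theorem stmt18_general (h2 : IsUnit (2 : R)) (φ σ : M ≃ₗ[R] M) (hσ2 : σ ^ 2 = 1)
    (hrev : σ * φ * σ⁻¹ = φ⁻¹) :
    ∃ (m : ℕ) (U : Fin m → Submodule R M),
      iSupIndep U ∧ (⨆ i, U i) = ⊤ ∧
      ∀ i, U i ∈ Module.End.invtSubmodule (φ : M →ₗ[R] M) ∧
        U i ∈ Module.End.invtSubmodule (σ : M →ₗ[R] M) ∧
        (IsIndecIn (Module.End.invtSubmodule (φ : M →ₗ[R] M)) (U i) ∨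
          ∃ X : Submodule R M, IsIndecIn (Module.End.invtSubmodule (φ : M →ₗ[R] M)) X ∧
            X ⊔ X.map (σ : M →ₗ[R] M) = U i ∧ X ⊓ X.map (σ : M →ₗ[R] M) = ⊥) := by
  let φ' : End R M := φ
  let σ' : End R M := σ
  have hσ : σ' * σ' = 1 := congrArg LinearEquiv.toLinearMap ((sq σ).symm.trans hσ2)
  have hrev' : φ' * σ' * φ' = σ' := by
    have φσφ : φ * σ * φ = σ := by
      rw [mul_assoc, mul_inv_eq_iff_eq_mul.1 hrev, mul_inv_cancel_left]
    exact congrArg LinearEquiv.toLinearMap φσφ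
  obtain ⟨m, U, hU, hsup, hindec⟩ := exists_fin_iSupIndep_isIndecIn
    (S := (φ'.invtSubmodule ∩ σ'.invtSubmodule : Set (Submodule R M)))
    ⟨Module.End.invtSubmodule.top_mem φ', Module.End.invtSubmodule.top_mem σ'⟩
  exact ⟨m, U, hU, hsup, fun i => ⟨(hindec i).1.1, (hindec i).1.2,
    (hindec i).isIndecIn_or_exists_sup_map_eq h2 hσ hrev'⟩⟩

end Decomposition

theorem IsIndecIn.modIndec_restrict {ψ : V →ₗ[K] V} {X : Submodule K V}
    (h : IsIndecIn (Module.End.invtSubmodule ψ : Set (Submodule K V)) X) :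
    ModIndec (ψ.restrict h.1) := by
  obtain ⟨-, top_ne, indec⟩ := (isIndecIn_top_restrict_iff h.1).2 h
  refine ⟨top_ne.symm, ?_⟩
  rintro ⟨A, B, hA, hB, hA₀, hB₀, hinf, hsup⟩
  exact (indec A hA B hB (disjoint_iff.2 hinf) hsup).elim hA₀ hB₀

/-- If `σ ∈ GL(W)` is an involution reversing `φ ∈ GL(W)`, then `W` is a
direct sum of `φ`- and `σ`-invariant subspaces, each either indecomposable as a
`K[x]`-module or of the form `X ⊕ Xσ` with `X` an indecomposable `K[x]`-submodule. -/
theorem stmt18 {W : Type*} [AddCommGroup W] [Module K W] [FiniteDimensional K W]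
    (hK : ringChar K ≠ 2)
    (φ σ : W ≃ₗ[K] W) (hσ2 : σ ^ 2 = 1) (hrev : σ * φ * σ⁻¹ = φ⁻¹) :
    ∃ (m : ℕ) (U : Fin m → Submodule K W),
      iSupIndep U ∧ (⨆ i, U i) = ⊤ ∧
      ∀ i, ∃ hUi : Invt (φ : W →ₗ[K] W) (U i),
        Invt (σ : W →ₗ[K] W) (U i) ∧
        (ModIndec ((φ : W →ₗ[K] W).restrict hUi) ∨
          ∃ (Xj : Submodule K W) (hXj : Invt (φ : W →ₗ[K] W) Xj),
            ModIndec ((φ : W →ₗ[K] W).restrict hXj) ∧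
            Xj ⊔ Xj.map (σ : W →ₗ[K] W) = U i ∧
            Xj ⊓ Xj.map (σ : W →ₗ[K] W) = ⊥) := by
  obtain ⟨m, U, hindep, hsup, hU⟩ :=
    stmt18_general (Ring.two_ne_zero hK).isUnit φ σ hσ2 hrev
  exact ⟨m, U, hindep, hsup, fun i => ⟨(hU i).1, (hU i).2.1, (hU i).2.2.imp
    (fun h => h.modIndec_restrict)
    (fun ⟨X, hX, hXσ⟩ => ⟨X, hX.1, hX.modIndec_restrict, hXσ⟩)⟩⟩

end Biref
end

section
/- Let K be a field with char K ≠ 2, V a finite-dimensional vector space over K, and φ ∈ SL(V) such that αφα⁻¹ = φ⁻¹ for some α ∈ GL(V). Then the following are equivalent: (1) if dim V ≡ 2 (mod 4), then φ has an elementary divisor (x − 1)^d or (x + 1)^d with d odd; (2) φ = στ for some σ, τ ∈ SL(V) with σ² = τ² = 1. -/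
open Polynomial Module

namespace Biref

variable {K V : Type*} [Field K] [AddCommGroup V] [Module K V]

/-!
Any `α` conjugating `φ` to `φ⁻¹` can be replaced by an involution `σ`. Since `φ⁻¹ = r(φ)` for a
polynomial `r`, one can split `V` into pieces compatible with the symmetry `p ↦ p ∘ r` of
polynomials: it either interchanges two coprime factors, where `α` and its inverse swap the two
pieces, or preserves a primary part, where one splits off a cyclic module `K[φ]v`, on which
`g(φ)v ↦ g(φ⁻¹)v` is an involution.
Factorizations `φ = σ(σφ)` into involutions correspond to such `σ`, so it remains to decide
whether `det σ = 1` is possible.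

If `φ` has a Jordan block of odd size with eigenvalue `±1`, one can choose the block stable under
`σ` with a complement stable under `φ` and `σ`; changing the sign of `σ` on the block changes the
sign of `det σ`. Otherwise `N = φ - φ⁻¹` has no Jordan block of odd size with eigenvalue `0`.
As `N` anticommutes with `σ`, it exchanges the eigenspaces of `σ`, and following the filtration
`V ⊇ im N ⊇ im N² ⊇ ⋯` shows that both eigenspaces have dimension `dim V / 2`.
Hence `det σ = (-1) ^ (dim V / 2)` for every admissible `σ`.
-/

section PolynomialAction

variable {W : Type*} [AddCommGroup W] [Module K W]

lemma semiconj_aeval {α : V →ₗ[K] W} {φ : End K V} {ψ : End K W}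
    (h : Function.Semiconj α φ ψ) (g : K[X]) :
    Function.Semiconj α (aeval φ g) (aeval ψ g) := by
  intro x
  induction g using Polynomial.induction_on' with
  | add f g hf hg => simp only [map_add, LinearMap.add_apply, hf, hg]
  | monomial n a =>
    have hpow : α ((φ ^ n) x) = (ψ ^ n) (α x) := by
      simpa only [Module.End.pow_apply] using h.iterate_right n x
    simp only [aeval_monomial, Module.End.mul_apply, Module.algebraMap_end_apply, map_smul, hpow]

lemma Invt.aeval {φ : End K V} {A : Submodule K V} (hA : Invt φ A) (g : K[X]) :
    Invt (aeval φ g) A := fun x hx ↦ by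
  have h := semiconj_aeval (α := A.subtype) (φ := φ.restrict hA) (ψ := φ) (fun _ ↦ rfl) g ⟨x, hx⟩
  exact h ▸ Subtype.property _

lemma Invt.coe_aeval_restrict {φ : End K V} {A : Submodule K V} (hA : Invt φ A) (g : K[X])
    (x : A) : (Polynomial.aeval (φ.restrict hA) g x : V) = Polynomial.aeval φ g x :=
  semiconj_aeval (α := A.subtype) (fun _ ↦ rfl) g x

lemma invt_ker_of_commute {φ ψ : End K V} (h : Commute φ ψ) : Invt φ (LinearMap.ker ψ) :=
  fun x hx ↦ by
    rw [LinearMap.mem_ker] at hx ⊢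
    rw [← Module.End.mul_apply, ← h.eq, Module.End.mul_apply, hx, map_zero]

lemma invt_range_of_commute {φ ψ : End K V} (h : Commute φ ψ) : Invt φ (LinearMap.range ψ) := by
  rintro _ ⟨x, rfl⟩
  exact ⟨φ x, LinearMap.congr_fun h.symm.eq x⟩

lemma commute_aeval (φ : End K V) (g : K[X]) : Commute φ (aeval φ g) := by
  simpa only [aeval_X] using (Commute.all X g).map (aeval φ)

lemma aeval_dualMap_apply (φ : End K V) (g : K[X]) (ℓ : Dual K V) :
    aeval (φ.dualMap : End K (Dual K V)) g ℓ = ℓ ∘ₗ aeval φ g := by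
  induction g using Polynomial.induction_on' with
  | add f g hf hg => simp only [map_add, LinearMap.add_apply, hf, hg, LinearMap.comp_add]
  | monomial n a =>
    have hpow : ((φ.dualMap : End K (Dual K V)) ^ n) ℓ = ℓ ∘ₗ (φ ^ n) := by
      induction n with
      | zero => rfl
      | succ n ih => rw [pow_succ', Module.End.mul_apply, ih, pow_succ]; rfl
    ext x
    simp [aeval_monomial, hpow]

lemma exists_aeval_eq_of_mul_eq_one [FiniteDimensional K V] {φ ψ : End K V} (h : ψ * φ = 1) :
    ∃ r : K[X], aeval φ r = ψ := by
  have hinj : Function.Injective φ := Function.LeftInverse.injective (DFunLike.congr_fun h)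
  have hcoprime : IsCoprime X (minpoly K φ) := by
    refine (irreducible_X.isCoprime_or_dvd _).resolve_right fun hdvd ↦ ?_
    exact LinearMap.minpoly_coeff_zero_of_injective hinj (X_dvd_iff.mp hdvd)
  obtain ⟨a, b, hab⟩ := hcoprime
  have haφ : aeval φ a * φ = 1 := by simpa using congrArg (aeval φ) hab
  exact ⟨a, left_inv_eq_right_inv haφ (mul_eq_one_comm.mp h)⟩

end PolynomialAction

section CyclicSplitting

lemma mem_cycSub {φ : End K V} {v x : V} : x ∈ cycSub φ v ↔ ∃ g : K[X], aeval φ g v = x := by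
  constructor
  · intro hx
    induction hx using Submodule.span_induction with
    | mem x hx => obtain ⟨n, rfl⟩ := hx; exact ⟨X ^ n, by simp⟩
    | zero => exact ⟨0, by simp⟩
    | add x y _ _ hx hy =>
      obtain ⟨f, rfl⟩ := hx; obtain ⟨g, rfl⟩ := hy; exact ⟨f + g, by simp⟩
    | smul c x _ hx => obtain ⟨g, rfl⟩ := hx; exact ⟨c • g, by simp⟩
  · rintro ⟨g, rfl⟩
    rw [aeval_eq_sum_range, LinearMap.sum_apply]
    exact Submodule.sum_mem _ fun n _ ↦
      Submodule.smul_mem _ _ (Submodule.subset_span ⟨n, rfl⟩)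

lemma invt_cycSub (φ : End K V) (v : V) : Invt φ (cycSub φ v) := by
  simp only [Invt, mem_cycSub]
  rintro _ ⟨g, rfl⟩
  exact ⟨X * g, by simp⟩

lemma self_mem_cycSub (φ : End K V) (v : V) : v ∈ cycSub φ v := mem_cycSub.mpr ⟨1, by simp⟩

/-- The largest `φ`-invariant subspace on which the functional `ℓ` vanishes. It is encoded as the
annihilator of the cyclic module generated by `ℓ` under the transpose of `φ`, which gives its
dimension. -/
def invKer (φ : End K V) (ℓ : Dual K V) : Submodule K V :=
  (cycSub (φ.dualMap : End K (Dual K V)) ℓ).dualCoannihilator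

lemma mem_invKer {φ : End K V} {ℓ : Dual K V} {x : V} :
    x ∈ invKer φ ℓ ↔ ∀ g : K[X], ℓ (aeval φ g x) = 0 := by
  simp only [invKer, Submodule.mem_dualCoannihilator, mem_cycSub, aeval_dualMap_apply,
    forall_exists_index, forall_apply_eq_imp_iff, LinearMap.comp_apply]

lemma invt_invKer (φ : End K V) (ℓ : Dual K V) : Invt φ (invKer φ ℓ) := fun x hx ↦
  mem_invKer.mpr fun g ↦ by
    have h := mem_invKer.mp hx (g * X)
    rwa [map_mul, aeval_X] at h

lemma exists_pow_dvd_mul_sub_pow {p : K[X]} (hp : Irreducible p) {m : ℕ} {g : K[X]}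
    (hg : ¬p ^ (m + 1) ∣ g) : ∃ h : K[X], p ^ (m + 1) ∣ h * g - p ^ m := by
  classical
  obtain ⟨i, hi, hassoc⟩ := (dvd_prime_pow hp.prime _).mp
    (EuclideanDomain.gcd_dvd_right g (p ^ (m + 1)))
  have him : i ≠ m + 1 := by
    rintro rfl
    exact hg (hassoc.symm.dvd.trans (EuclideanDomain.gcd_dvd_left _ _))
  obtain ⟨c, hc⟩ := hassoc.dvd.trans (pow_dvd_pow p (show i ≤ m by omega))
  refine ⟨c * EuclideanDomain.gcdA g (p ^ (m + 1)), -(c * EuclideanDomain.gcdB g (p ^ (m + 1))), ?_⟩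
  linear_combination -hc - c * EuclideanDomain.gcd_eq_gcd_ab g (p ^ (m + 1))

lemma pow_dvd_of_map_aeval_eq_zero {W : Type*} [AddCommGroup W] [Module K W] {φ : End K V}
    {p : K[X]} (hp : Irreducible p) {m : ℕ} {v : V} {f : V →ₗ[K] W}
    (hv : aeval φ (p ^ (m + 1)) v = 0) (hfv : f (aeval φ (p ^ m) v) ≠ 0) {g : K[X]}
    (hg : ∀ h : K[X], f (aeval φ (h * g) v) = 0) : p ^ (m + 1) ∣ g := by
  by_contra hndvd
  obtain ⟨h, c, hc⟩ := exists_pow_dvd_mul_sub_pow hp hndvd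
  have hpm : p ^ m = h * g - c * p ^ (m + 1) := by linear_combination -hc
  refine hfv ?_
  rw [hpm, map_sub, LinearMap.sub_apply, map_sub, hg, map_mul, Module.End.mul_apply, hv]
  simp

lemma aeval_apply_eq_zero_iff_pow_dvd {φ : End K V} {p : K[X]} (hp : Irreducible p) {m : ℕ}
    {v : V} (hv : aeval φ (p ^ (m + 1)) v = 0) (hv' : aeval φ (p ^ m) v ≠ 0) {g : K[X]} :
    aeval φ g v = 0 ↔ p ^ (m + 1) ∣ g := by
  constructor
  · intro hg
    refine pow_dvd_of_map_aeval_eq_zero (f := LinearMap.id) hp hv hv' fun h ↦ ?_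
    rw [map_mul, Module.End.mul_apply, hg, map_zero, map_zero]
  · rintro ⟨c, rfl⟩
    rw [mul_comm, map_mul, Module.End.mul_apply, hv, map_zero]

lemma finrank_cycSub {φ : End K V} {p : K[X]} (hp : Irreducible p) {m : ℕ} {v : V}
    (hv : aeval φ (p ^ (m + 1)) v = 0) (hv' : aeval φ (p ^ m) v ≠ 0) :
    finrank K (cycSub φ v) = (p ^ (m + 1)).natDegree := by
  let eval : K[X] →ₗ[K] V := LinearMap.applyₗ v ∘ₗ (aeval φ).toLinearMap
  have hrange : cycSub φ v = LinearMap.range eval := by ext x; exact mem_cycSub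
  have hker : LinearMap.ker eval = (Ideal.span {p ^ (m + 1)}).restrictScalars K := by
    ext g
    rw [LinearMap.mem_ker, Submodule.restrictScalars_mem, Ideal.mem_span_singleton]
    exact aeval_apply_eq_zero_iff_pow_dvd hp hv hv'
  rw [hrange, ← eval.quotKerEquivRange.finrank_eq, hker]
  exact finrank_quotient_span_eq_natDegree

lemma isCompl_cycSub_invKer [FiniteDimensional K V] {φ : End K V} {p : K[X]} (hp : Irreducible p)
    {m : ℕ} {v : V} {ℓ : Dual K V} (hv : aeval φ (p ^ (m + 1)) v = 0)
    (hℓ : ℓ ∘ₗ aeval φ (p ^ (m + 1)) = 0) (hℓv : ℓ (aeval φ (p ^ m) v) ≠ 0) :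
    IsCompl (cycSub φ v) (invKer φ ℓ) := by
  have hv' : aeval φ (p ^ m) v ≠ 0 := fun h ↦ hℓv (by rw [h, map_zero])
  have hℓ' : ℓ ∘ₗ aeval φ (p ^ m) ≠ 0 := fun h ↦ hℓv (LinearMap.congr_fun h v)
  have hdim : finrank K (cycSub φ v) + finrank K (invKer φ ℓ) = finrank K V := by
    rw [← aeval_dualMap_apply] at hℓ hℓ'
    rw [finrank_cycSub hp hv hv', ← finrank_cycSub hp hℓ hℓ']
    exact Subspace.finrank_add_finrank_dualCoannihilator_eq _
  refine (Submodule.isCompl_iff_disjoint _ _ hdim.ge).mpr (Submodule.disjoint_def.mpr ?_)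
  intro x hx hxW
  obtain ⟨g, rfl⟩ := mem_cycSub.mp hx
  refine (aeval_apply_eq_zero_iff_pow_dvd hp hv hv').mpr
    (pow_dvd_of_map_aeval_eq_zero hp hv hℓv fun h ↦ ?_)
  rw [map_mul, Module.End.mul_apply]
  exact mem_invKer.mp hxW h

end CyclicSplitting

section InvolutiveTwist

lemma exists_notMem_and_notMem {A B : Submodule K V} (hA : A ≠ ⊤) (hB : B ≠ ⊤) :
    ∃ x, x ∉ A ∧ x ∉ B := by
  obtain ⟨a, ha⟩ := SetLike.exists_not_mem_of_ne_top A hA rfl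
  obtain ⟨b, hb⟩ := SetLike.exists_not_mem_of_ne_top B hB rfl
  by_cases haB : a ∈ B
  · by_cases hbA : b ∈ A
    · exact ⟨a + b, fun h ↦ ha ((A.add_mem_iff_left hbA).mp h),
        fun h ↦ hb ((B.add_mem_iff_right haB).mp h)⟩
    · exact ⟨b, hbA, hb⟩
  · exact ⟨a, ha, haB⟩

lemma exists_apply_ne_zero_and_apply_ne_zero {W W' : Type*} [AddCommGroup W] [Module K W]
    [AddCommGroup W'] [Module K W'] {f : V →ₗ[K] W} {g : V →ₗ[K] W'} (hf : f ≠ 0) (hg : g ≠ 0) :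
    ∃ x, f x ≠ 0 ∧ g x ≠ 0 :=
  exists_notMem_and_notMem (A := LinearMap.ker f) (B := LinearMap.ker g)
    (mt LinearMap.ker_eq_top.mp hf) (mt LinearMap.ker_eq_top.mp hg)

/-- An injective endomorphism conjugating `φ` to the polynomial `r` in `φ`. Recording `r` rather
than the endomorphism `r(φ)` lets the notion pass to `φ`-invariant subspaces. -/
structure IsTwist (r : K[X]) (φ α : End K V) : Prop where
  injective : Function.Injective α
  semiconj : Function.Semiconj α φ (aeval φ r)

/-- `φ` is conjugate to the polynomial `r` in `φ` by an involution. -/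
def HasInvolutiveTwist (r : K[X]) (φ : End K V) : Prop :=
  ∃ σ : End K V, Function.Involutive σ ∧ Function.Semiconj σ φ (aeval φ r)

variable {r : K[X]} {φ α : End K V}

lemma HasInvolutiveTwist.of_isCompl {A B : Submodule K V} (h : IsCompl A B) (hA : Invt φ A)
    (hB : Invt φ B) (hφA : HasInvolutiveTwist r (φ.restrict hA))
    (hφB : HasInvolutiveTwist r (φ.restrict hB)) : HasInvolutiveTwist r φ := by
  obtain ⟨σA, hσA, hσφA⟩ := hφA
  obtain ⟨σB, hσB, hσφB⟩ := hφB
  let σ : End K V := LinearMap.ofIsCompl h (A.subtype ∘ₗ σA) (B.subtype ∘ₗ σB)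
  have hσa (a : A) : σ a = σA a := LinearMap.ofIsCompl_apply_left h a
  have hσb (b : B) : σ b = σB b := LinearMap.ofIsCompl_apply_right h b
  have hinv : σ ∘ₗ σ = LinearMap.id := by
    refine LinearMap.ext_on_codisjoint h.codisjoint (fun a ha ↦ ?_) fun b hb ↦ ?_
    · lift a to A using ha
      simp [hσa, hσA a]
    · lift b to B using hb
      simp [hσb, hσB b]
  have hsemiconj : σ ∘ₗ φ = aeval φ r ∘ₗ σ := by
    refine LinearMap.ext_on_codisjoint h.codisjoint (fun a ha ↦ ?_) fun b hb ↦ ?_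
    · lift a to A using ha
      have hφa := hσa (φ.restrict hA a)
      rw [hσφA a, hA.coe_aeval_restrict, ← hσa] at hφa
      exact hφa
    · lift b to B using hb
      have hφb := hσb (φ.restrict hB b)
      rw [hσφB b, hB.coe_aeval_restrict, ← hσb] at hφb
      exact hφb
  exact ⟨σ, LinearMap.congr_fun hinv, LinearMap.congr_fun hsemiconj⟩

namespace IsTwist

lemma apply_aeval (hα : IsTwist r φ α) (g : K[X]) (x : V) :
    α (aeval φ g x) = aeval φ (g.comp r) (α x) := by
  rw [aeval_comp]
  exact semiconj_aeval hα.semiconj g x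

lemma apply_aeval_comp (hα : IsTwist r φ α) (hr : aeval φ (r.comp r) = φ) (g : K[X]) (x : V) :
    α (aeval φ (g.comp r) x) = aeval φ g (α x) := by
  rw [hα.apply_aeval, comp_assoc, aeval_comp, hr]

lemma aeval_comp_eq_zero_iff (hα : IsTwist r φ α) (hr : aeval φ (r.comp r) = φ) {g : K[X]} :
    aeval φ (g.comp r) = 0 ↔ aeval φ g = 0 := by
  have of_eq_zero {g : K[X]} (hg : aeval φ g = 0) : aeval φ (g.comp r) = 0 := by
    ext x
    apply hα.injective
    rw [hα.apply_aeval_comp hr, hg, LinearMap.zero_apply, LinearMap.zero_apply, map_zero]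
  refine ⟨fun hg ↦ ?_, of_eq_zero⟩
  rw [← hr, ← aeval_comp, ← comp_assoc]
  exact of_eq_zero hg

lemma restrict (hα : IsTwist r φ α) {A : Submodule K V} (hA : Invt φ A) (hαA : Invt α A) :
    IsTwist r (φ.restrict hA) (α.restrict hαA) where
  injective _ _ h := Subtype.ext (hα.injective (congrArg Subtype.val h))
  semiconj x := Subtype.ext <| by
    rw [hA.coe_aeval_restrict]
    exact hα.semiconj x

lemma projection {W U : Submodule K V} (hα : IsTwist r φ α) (hWU : IsCompl W U) (hW : Invt φ W)
    (hU : Invt φ U) (hαW : ∀ w ∈ W, α w ∈ U → w = 0) :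
    IsTwist r (φ.restrict hW) (W.projectionOnto U hWU ∘ₗ α ∘ₗ W.subtype) where
  injective := by
    refine (injective_iff_map_eq_zero _).mpr fun w hw ↦ Subtype.ext (hαW w w.2 ?_)
    exact (Submodule.projectionOnto_apply_eq_zero_iff hWU).mp hw
  semiconj := by
    have hproj : Function.Semiconj (W.projectionOnto U hWU) φ (φ.restrict hW) := by
      refine LinearMap.congr_fun (f := W.projectionOnto U hWU ∘ₗ φ)
        (g := φ.restrict hW ∘ₗ W.projectionOnto U hWU) ?_
      refine LinearMap.ext_on_codisjoint hWU.codisjoint (fun w hw ↦ ?_) fun u hu ↦ ?_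
      · simp only [LinearMap.comp_apply, Submodule.projectionOnto_apply_of_mem_left hWU hw,
          Submodule.projectionOnto_apply_of_mem_left hWU (hW w hw)]
        rfl
      · simp only [LinearMap.comp_apply, (Submodule.projectionOnto_apply_eq_zero_iff hWU).mpr hu,
          (Submodule.projectionOnto_apply_eq_zero_iff hWU).mpr (hU u hu), map_zero]
    exact fun w ↦ (congrArg _ (hα.semiconj w)).trans (semiconj_aeval hproj r (α w))

lemma hasInvolutiveTwist_of_isCompl_map (hα : IsTwist r φ α) (hr : aeval φ (r.comp r) = φ)
    {A : Submodule K V} (hA : Invt φ A) (h : IsCompl A (A.map α)) : HasInvolutiveTwist r φ := by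
  let e := Submodule.equivMapOfInjective α hα.injective A
  let σ : End K V :=
    LinearMap.ofIsCompl h ((A.map α).subtype ∘ₗ e) (A.subtype ∘ₗ (e.symm : A.map α →ₗ[K] A))
  have hσ (a : V) (ha : a ∈ A) : σ a = α a := LinearMap.ofIsCompl_apply_left h ⟨a, ha⟩
  have hσα (a : V) (ha : a ∈ A) : σ (α a) = a := by
    refine (LinearMap.ofIsCompl_apply_right h (e ⟨a, ha⟩)).trans ?_
    simp
  have hinv : σ ∘ₗ σ = LinearMap.id := by
    refine LinearMap.ext_on_codisjoint h.codisjoint (fun a ha ↦ ?_) ?_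
    · simp [hσ a ha, hσα a ha]
    · rintro _ ⟨a, ha, rfl⟩
      simp [hσ a ha, hσα a ha]
  have hsemiconj : σ ∘ₗ φ = aeval φ r ∘ₗ σ := by
    refine LinearMap.ext_on_codisjoint h.codisjoint (fun a ha ↦ ?_) ?_
    · simp only [LinearMap.comp_apply, hσ a ha, hσ _ (hA a ha), hα.semiconj a]
    · rintro _ ⟨a, ha, rfl⟩
      have hφα : φ (α a) = α (aeval φ r a) := by
        simpa using (hα.apply_aeval_comp hr X a).symm
      simp only [LinearMap.comp_apply, hσα a ha, hφα, hσα _ (hA.aeval r a ha)]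
  exact ⟨σ, LinearMap.congr_fun hinv, LinearMap.congr_fun hsemiconj⟩

lemma hasInvolutiveTwist_of_isCoprime [FiniteDimensional K V] (hα : IsTwist r φ α)
    (hr : aeval φ (r.comp r) = φ) {f : K[X]} (hf : IsCoprime f (f.comp r))
    (hφ : aeval φ (f * f.comp r) = 0) : HasInvolutiveTwist r φ := by
  have hmap : (LinearMap.ker (aeval φ f)).map α = LinearMap.ker (aeval φ (f.comp r)) := by
    ext x
    constructor
    · rintro ⟨a, ha, rfl⟩
      rw [LinearMap.mem_ker, ← hα.apply_aeval, LinearMap.mem_ker.mp ha, map_zero]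
    · intro hx
      obtain ⟨a, rfl⟩ := LinearMap.injective_iff_surjective.mp hα.injective x
      rw [LinearMap.mem_ker, ← hα.apply_aeval, map_eq_zero_iff α hα.injective] at hx
      exact ⟨a, hx, rfl⟩
  have hsup : LinearMap.ker (aeval φ f) ⊔ LinearMap.ker (aeval φ (f.comp r)) = ⊤ := by
    rw [sup_ker_aeval_eq_ker_aeval_mul_of_coprime φ hf, hφ, LinearMap.ker_zero]
  refine hasInvolutiveTwist_of_isCompl_map hα hr (invt_ker_of_commute (commute_aeval φ f)) ?_
  rw [hmap]
  exact ⟨disjoint_ker_aeval_of_isCoprime φ hf, codisjoint_iff.mpr hsup⟩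

end IsTwist

lemma Invt.aeval_comp_self_restrict {A : Submodule K V} (hA : Invt φ A)
    (hr : Polynomial.aeval φ (r.comp r) = φ) :
    Polynomial.aeval (φ.restrict hA) (r.comp r) = φ.restrict hA := by
  ext x
  rw [hA.coe_aeval_restrict, hr]
  rfl

lemma hasInvolutiveTwist_of_cycSub_eq_top (hr : aeval φ (r.comp r) = φ) {v : V}
    (hv : cycSub φ v = ⊤) (hann : ∀ g, aeval φ g v = 0 → aeval φ (g.comp r) v = 0) :
    HasInvolutiveTwist r φ := by
  let eval : K[X] →ₗ[K] V := LinearMap.applyₗ v ∘ₗ (aeval φ).toLinearMap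
  let twistedEval : K[X] →ₗ[K] V := LinearMap.applyₗ v ∘ₗ (aeval (aeval φ r)).toLinearMap
  have hgen (x : V) : ∃ g : K[X], aeval φ g v = x := mem_cycSub.mp (hv ▸ Submodule.mem_top)
  obtain ⟨s, hs⟩ := eval.exists_rightInverse_of_surjective (LinearMap.range_eq_top.mpr hgen)
  have hσ (g : K[X]) : (twistedEval ∘ₗ s) (aeval φ g v) = aeval φ (g.comp r) v := by
    have hsg : aeval φ (s (aeval φ g v) - g) v = 0 := by
      rw [map_sub, LinearMap.sub_apply, sub_eq_zero]
      exact LinearMap.congr_fun hs (aeval φ g v)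
    have hsr := hann _ hsg
    rw [sub_comp, map_sub, LinearMap.sub_apply, sub_eq_zero] at hsr
    rw [← hsr, aeval_comp]
    rfl
  refine ⟨twistedEval ∘ₗ s, fun x ↦ ?_, fun x ↦ ?_⟩
  · obtain ⟨g, rfl⟩ := hgen x
    rw [hσ, hσ, comp_assoc, aeval_comp, hr]
  · obtain ⟨g, rfl⟩ := hgen x
    have hφg := hσ (X * g)
    rw [mul_comp, X_comp, map_mul, map_mul, aeval_X] at hφg
    rw [hσ]
    exact hφg

lemma hasInvolutiveTwist_restrict_cycSub (hr : aeval φ (r.comp r) = φ) {v : V}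
    (hann : ∀ g, aeval φ g v = 0 → aeval φ (g.comp r) v = 0) :
    HasInvolutiveTwist r (φ.restrict (invt_cycSub φ v)) := by
  have hU := invt_cycSub φ v
  refine hasInvolutiveTwist_of_cycSub_eq_top (hU.aeval_comp_self_restrict hr)
    (v := ⟨v, self_mem_cycSub φ v⟩) (eq_top_iff.mpr fun x _ ↦ ?_) fun g hg ↦ ?_
  · obtain ⟨g, hg⟩ := mem_cycSub.mp x.2
    exact mem_cycSub.mpr ⟨g, Subtype.ext ((hU.coe_aeval_restrict g _).trans hg)⟩
  · apply Subtype.ext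
    rw [hU.coe_aeval_restrict]
    exact hann g (by rw [← hU.coe_aeval_restrict g ⟨v, self_mem_cycSub φ v⟩, hg]; rfl)

lemma IsTwist.exists_isCompl_of_isNilpotent [FiniteDimensional K V] [Nontrivial V]
    (hα : IsTwist r φ α) (hr : aeval φ (r.comp r) = φ) {p : K[X]} (hp : Irreducible p)
    (hnil : IsNilpotent (aeval φ p)) :
    ∃ (U W : Submodule K V) (hU : Invt φ U) (hW : Invt φ W), IsCompl U W ∧ U ≠ ⊥ ∧
      HasInvolutiveTwist r (φ.restrict hU) ∧ ∃ β, IsTwist r (φ.restrict hW) β := by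
  obtain ⟨m, hm, hm'⟩ : ∃ m, aeval φ (p ^ (m + 1)) = 0 ∧ aeval φ (p ^ m) ≠ 0 := by
    simp only [map_pow]
    exact ⟨nilpotencyClass (aeval φ p) - 1,
      by rw [Nat.sub_add_cancel (pos_nilpotencyClass_iff.mpr hnil), pow_nilpotencyClass hnil],
      pow_pred_nilpotencyClass hnil⟩
  obtain ⟨v, hv, hrv⟩ := exists_apply_ne_zero_and_apply_ne_zero hm'
    (mt (hα.aeval_comp_eq_zero_iff hr).mp hm')
  have hαv : aeval φ (p ^ m) (α v) ≠ 0 := by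
    rwa [← hα.apply_aeval_comp hr, Ne, map_eq_zero_iff α hα.injective]
  obtain ⟨ℓ, hℓv, hℓαv⟩ : ∃ ℓ : Dual K V, ℓ (aeval φ (p ^ m) v) ≠ 0 ∧
      ℓ (aeval φ (p ^ m) (α v)) ≠ 0 :=
    exists_apply_ne_zero_and_apply_ne_zero (f := Dual.eval K V _) (g := Dual.eval K V _)
      (mt (eval_apply_eq_zero_iff K _).mp hv) (mt (eval_apply_eq_zero_iff K _).mp hαv)
  have hcompl (w : V) (hw : ℓ (aeval φ (p ^ m) w) ≠ 0) : IsCompl (cycSub φ w) (invKer φ ℓ) :=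
    isCompl_cycSub_invKer hp (by rw [hm]; rfl) (by rw [hm, LinearMap.comp_zero]) hw
  refine ⟨cycSub φ v, invKer φ ℓ, invt_cycSub φ v, invt_invKer φ ℓ, hcompl v hℓv, ?_, ?_, _,
    hα.projection (hcompl (α v) hℓαv).symm (invt_invKer φ ℓ) (invt_cycSub φ (α v)) ?_⟩
  · intro hbot
    have hv0 : v = 0 := by simpa [hbot] using self_mem_cycSub φ v
    exact hv (by rw [hv0, map_zero])
  · refine hasInvolutiveTwist_restrict_cycSub hr fun g hg ↦ ?_
    obtain ⟨c, rfl⟩ := (aeval_apply_eq_zero_iff_pow_dvd hp (by rw [hm]; rfl) hv).mp hg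
    have hzero : aeval φ ((p ^ (m + 1) * c).comp r) = 0 := by
      rw [hα.aeval_comp_eq_zero_iff hr, map_mul, hm, zero_mul]
    rw [hzero, LinearMap.zero_apply]
  · intro w hw hαw
    obtain ⟨g, hg⟩ := mem_cycSub.mp hαw
    rw [← hα.apply_aeval_comp hr] at hg
    exact (Submodule.disjoint_def.mp (hcompl v hℓv).disjoint) w
      (mem_cycSub.mpr ⟨_, hα.injective hg⟩) hw

lemma exists_irreducible_ker_aeval_ne_bot [FiniteDimensional K V] [Nontrivial V] (φ : End K V) :
    ∃ p : K[X], Irreducible p ∧ LinearMap.ker (aeval φ p) ≠ ⊥ := by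
  have hφ : IsIntegral K φ := Algebra.IsIntegral.isIntegral φ
  obtain ⟨p, hp, c, hc⟩ := WfDvdMonoid.exists_irreducible_factor (minpoly.not_isUnit K φ)
    (minpoly.ne_zero hφ)
  refine ⟨p, hp, fun hker ↦ hp.not_isUnit ?_⟩
  have hc0 : c ≠ 0 := by
    rintro rfl
    exact minpoly.ne_zero hφ (by rw [hc, mul_zero])
  have hcφ : aeval φ c = 0 := by
    ext x
    apply LinearMap.ker_eq_bot.mp hker
    rw [← Module.End.mul_apply, ← map_mul, ← hc, minpoly.aeval]
    simp
  have hdvd : p * c ∣ 1 * c := by simpa only [one_mul, ← hc] using minpoly.dvd K φ hcφ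
  exact isUnit_of_dvd_one ((mul_dvd_mul_iff_right hc0).mp hdvd)

namespace IsTwist

lemma commute_aeval_mul_comp (hα : IsTwist r φ α) (hr : aeval φ (r.comp r) = φ) (f : K[X]) :
    Commute α (aeval φ (f * f.comp r)) := by
  ext x
  rw [Module.End.mul_apply, Module.End.mul_apply, hα.apply_aeval, mul_comp, comp_assoc,
    mul_comm f, map_mul, map_mul, aeval_comp (p := f) (q := r.comp r), hr]

lemma isNilpotent_of_dvd_comp (hα : IsTwist r φ α) (hr : aeval φ (r.comp r) = φ) {p : K[X]}
    (hp : p ∣ p.comp r) (hnil : IsNilpotent (aeval φ (p * p.comp r))) :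
    IsNilpotent (aeval φ p) := by
  obtain ⟨k, hk⟩ := hnil
  have hdvd : (p * p.comp r) ^ k ∣ (p ^ (2 * k)).comp r := by
    rw [pow_comp, pow_mul, sq]
    exact pow_dvd_pow_of_dvd (mul_dvd_mul_right hp _) k
  refine ⟨2 * k, ?_⟩
  rw [← map_pow, ← hα.aeval_comp_eq_zero_iff hr]
  obtain ⟨c, hc⟩ := hdvd
  rw [hc, map_mul, map_pow, hk, zero_mul]

theorem hasInvolutiveTwist [FiniteDimensional K V] (hα : IsTwist r φ α)
    (hr : aeval φ (r.comp r) = φ) : HasInvolutiveTwist r φ := by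
  induction hn : finrank K V using Nat.strong_induction_on generalizing V with
  | _ n ih =>
  subst hn
  have of_ne_top {A : Submodule K V} (hA : Invt φ A) (hAtop : A ≠ ⊤) {β : End K A}
      (hβ : IsTwist r (φ.restrict hA) β) : HasInvolutiveTwist r (φ.restrict hA) :=
    ih _ (Submodule.finrank_lt hAtop) hβ (hA.aeval_comp_self_restrict hr) rfl
  rcases subsingleton_or_nontrivial V with _ | _
  · exact ⟨LinearMap.id, fun _ ↦ rfl, fun _ ↦ Subsingleton.elim _ _⟩
  obtain ⟨p, hp, hker⟩ := exists_irreducible_ker_aeval_ne_bot φ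
  set S := aeval φ (p * p.comp r) with hS
  obtain ⟨k, hfitting, hk⟩ := (S.eventually_isCompl_ker_pow_range_pow.and
    (Filter.eventually_ne_atTop 0)).exists
  by_cases hSk : S ^ k = 0
  · rcases hp.isCoprime_or_dvd (p.comp r) with hcoprime | hdvd
    · refine hα.hasInvolutiveTwist_of_isCoprime hr (f := p ^ k) ?_ ?_
      · rw [pow_comp]
        exact hcoprime.pow
      · rw [pow_comp, ← mul_pow, map_pow, hSk]
    · obtain ⟨U, W, hU, hW, hUW, hUbot, hφU, β, hβ⟩ :=
        hα.exists_isCompl_of_isNilpotent hr hp (hα.isNilpotent_of_dvd_comp hr hdvd ⟨k, hSk⟩)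
      refine .of_isCompl hUW hU hW hφU (of_ne_top hW (fun h ↦ hUbot ?_) hβ)
      exact eq_bot_of_isCompl_top (h ▸ hUW)
  · have hφS : Commute φ (S ^ k) := (commute_aeval φ _).pow_right k
    have hαS : Commute α (S ^ k) := (hα.commute_aeval_mul_comp hr p).pow_right k
    have hSker : LinearMap.ker (S ^ k) ≠ ⊥ := by
      rw [Ne, ← LinearMap.isUnit_iff_ker_eq_bot] at hker
      rw [Ne, ← LinearMap.isUnit_iff_ker_eq_bot, isUnit_pow_iff hk, hS, map_mul,
        ((Commute.all p (p.comp r)).map (aeval φ)).isUnit_mul_iff]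
      exact fun h ↦ hker h.1
    refine .of_isCompl hfitting (invt_ker_of_commute hφS) (invt_range_of_commute hφS)
      (of_ne_top _ ?_ (hα.restrict _ (invt_ker_of_commute hαS)))
      (of_ne_top _ ?_ (hα.restrict _ (invt_range_of_commute hαS)))
    · rwa [Ne, LinearMap.ker_eq_top]
    · exact fun h ↦ hSker (eq_bot_of_isCompl_top (h ▸ hfitting))

end IsTwist

end InvolutiveTwist

section JordanBlock

lemma finrank_map_add_finrank_inf_ker [FiniteDimensional K V] (f : End K V) (A : Submodule K V) :
    finrank K (A.map f) + finrank K (A ⊓ LinearMap.ker f : Submodule K V) = finrank K A := by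
  rw [← LinearMap.range_domRestrict, ← (f.domRestrict A).finrank_range_add_finrank_ker,
    LinearMap.ker_domRestrict, ← Submodule.map_comap_subtype, Submodule.finrank_map_subtype_eq]

/-- `M` has a nilpotent Jordan block of size `m + 1`: some vector in the kernel of `M` is an
`m`-th but not an `(m + 1)`-st iterated image. -/
def HasJordanBlock (M : End K V) (m : ℕ) : Prop :=
  ¬LinearMap.ker M ⊓ LinearMap.range (M ^ m) ≤ LinearMap.range (M ^ (m + 1))

lemma finrank_ker_inf_range_pow [FiniteDimensional K V] (M : End K V) (m : ℕ) :
    finrank K (LinearMap.ker M ⊓ LinearMap.range (M ^ m) : Submodule K V) +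
      finrank K (LinearMap.ker (M ^ m)) = finrank K (LinearMap.ker (M ^ (m + 1))) := by
  have hle : LinearMap.ker (M ^ m) ≤ LinearMap.ker (M ^ (m + 1)) := by
    rw [pow_succ']
    exact LinearMap.ker_le_ker_comp _ _
  have hmap : (LinearMap.ker (M ^ (m + 1))).map (M ^ m) =
      LinearMap.ker M ⊓ LinearMap.range (M ^ m) := by
    rw [pow_succ', Module.End.mul_eq_comp, LinearMap.ker_comp, Submodule.map_comap_eq, inf_comm]
  rw [← finrank_map_add_finrank_inf_ker (M ^ m) (LinearMap.ker (M ^ (m + 1))), hmap,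
    inf_eq_right.mpr hle]

lemma hasJordanBlock_iff_finrank_lt [FiniteDimensional K V] {M : End K V} {m : ℕ} :
    HasJordanBlock M m ↔
      finrank K (LinearMap.ker M ⊓ LinearMap.range (M ^ (m + 1)) : Submodule K V) <
        finrank K (LinearMap.ker M ⊓ LinearMap.range (M ^ m) : Submodule K V) := by
  have hle : LinearMap.ker M ⊓ LinearMap.range (M ^ (m + 1)) ≤
      LinearMap.ker M ⊓ LinearMap.range (M ^ m) := by
    refine inf_le_inf_left _ ?_
    rw [pow_succ]
    exact LinearMap.range_comp_le_range _ _
  constructor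
  · refine fun h ↦ Submodule.finrank_lt_finrank_of_lt (hle.lt_of_not_ge fun hge ↦ h ?_)
    exact hge.trans inf_le_right
  · exact fun h hge ↦ h.not_ge (Submodule.finrank_mono (le_inf inf_le_left hge))

lemma edMult_succ_ne_zero_iff [FiniteDimensional K V] (φ : End K V) {p : K[X]}
    (hp : p.natDegree = 1) (m : ℕ) :
    edMult φ p (m + 1) ≠ 0 ↔ HasJordanBlock (aeval φ p) m := by
  have hm := finrank_ker_inf_range_pow (aeval φ p) m
  have hm' := finrank_ker_inf_range_pow (aeval φ p) (m + 1)
  rw [hasJordanBlock_iff_finrank_lt, edMult, hp, Nat.div_one, Nat.add_sub_cancel]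
  omega

lemma HasJordanBlock.of_mul {ψ M : End K V} (hψ : IsUnit ψ) (hcomm : Commute ψ M) {m : ℕ}
    (h : HasJordanBlock (ψ * M) m) : HasJordanBlock M m := by
  have hker : LinearMap.ker (ψ * M) = LinearMap.ker M :=
    LinearMap.ker_comp_of_ker_eq_bot M
      (LinearMap.ker_eq_bot.mpr ((Module.End.isUnit_iff ψ).mp hψ).injective)
  have hrange (j : ℕ) : LinearMap.range ((ψ * M) ^ j) = LinearMap.range (M ^ j) := by
    rw [hcomm.mul_pow, (hcomm.pow_pow j j).eq]
    exact LinearMap.range_comp_of_range_eq_top _ (LinearMap.range_eq_top.mpr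
      ((Module.End.isUnit_iff _).mp (hψ.pow j)).surjective)
  rwa [HasJordanBlock, hker, hrange, hrange] at h

lemma mem_range_pow_of_not_hasJordanBlock {φ : End K V} {f g : K[X]} (hfg : IsCoprime f g) {m : ℕ}
    (hf : ¬HasJordanBlock (aeval φ f) m) {x : V} (hfx : aeval φ f x = 0)
    (hx : x ∈ LinearMap.range (aeval φ (f * g) ^ m)) :
    x ∈ LinearMap.range (aeval φ (f * g) ^ (m + 1)) := by
  have hxf : x ∈ LinearMap.range (aeval φ f ^ m) := by
    rw [← map_pow, mul_pow, map_mul, map_pow] at hx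
    exact LinearMap.range_comp_le_range _ _ hx
  obtain ⟨y, hy⟩ := not_not.mp hf ⟨hfx, hxf⟩
  obtain ⟨a, b, hab⟩ := hfg.pow (m := m + 1) (n := m + 1)
  refine ⟨aeval φ b y, ?_⟩
  have hpoly : (f * g) ^ (m + 1) * b = f ^ (m + 1) - a * f ^ m * f * f ^ (m + 1) := by
    linear_combination f ^ (m + 1) * hab
  rw [← map_pow, ← Module.End.mul_apply, ← map_mul, hpoly, map_sub, LinearMap.sub_apply,
    map_mul (aeval φ) (a * f ^ m * f), Module.End.mul_apply, map_pow, hy,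
    map_mul (aeval φ) (a * f ^ m), Module.End.mul_apply, hfx, map_zero, sub_zero]

lemma HasJordanBlock.of_aeval_mul {φ : End K V} {f g : K[X]} (hfg : IsCoprime f g) {m : ℕ}
    (h : HasJordanBlock (aeval φ (f * g)) m) :
    HasJordanBlock (aeval φ f) m ∨ HasJordanBlock (aeval φ g) m := by
  by_contra! hnot
  refine h fun x hx ↦ ?_
  obtain ⟨a, b, hab⟩ := hfg
  have hrange (q : K[X]) : aeval φ q x ∈ LinearMap.range (aeval φ (f * g) ^ m) :=
    invt_range_of_commute (((Commute.all q (f * g)).map (aeval φ)).pow_right m) x hx.2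
  have hker {p q : K[X]} (hpq : p * q = f * g) (c : K[X]) : aeval φ p (aeval φ (c * q) x) = 0 := by
    rw [← Module.End.mul_apply, ← map_mul, mul_left_comm, hpq, map_mul, Module.End.mul_apply,
      LinearMap.mem_ker.mp hx.1, map_zero]
  have hsplit : aeval φ (a * f) x + aeval φ (b * g) x = x := by
    rw [← LinearMap.add_apply, ← map_add, hab, map_one, Module.End.one_apply]
  rw [← hsplit]
  refine add_mem ?_ (mem_range_pow_of_not_hasJordanBlock ⟨a, b, hab⟩ hnot.1 (hker rfl b) (hrange _))
  have hgf := mem_range_pow_of_not_hasJordanBlock (IsCoprime.symm ⟨a, b, hab⟩) hnot.2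
    (hker (mul_comm g f) a) (by rw [mul_comm g f]; exact hrange _)
  rwa [mul_comm g f] at hgf

end JordanBlock

section Involution

lemma det_eq_neg_one_pow_finrank_eigenspace [FiniteDimensional K V] {σ : End K V}
    (hσ : σ * σ = 1) : LinearMap.det σ = (-1) ^ finrank K (σ.eigenspace (-1)) := by
  have hW : σ.eigenspace (-1) ≤ (σ.eigenspace (-1)).comap σ := fun x hx ↦ by
    rw [Submodule.mem_comap, Module.End.mem_eigenspace_iff] at *
    rw [hx, map_smul, hx]
  have hrestrict : σ.restrict hW = (-1 : K) • LinearMap.id :=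
    LinearMap.ext fun x ↦ Subtype.ext (Module.End.mem_eigenspace_iff.mp x.2)
  have hquot : (σ.eigenspace (-1)).mapQ (σ.eigenspace (-1)) σ hW = LinearMap.id := by
    refine Submodule.linearMap_qext _ (LinearMap.ext fun x ↦ ?_)
    simp only [LinearMap.comp_apply, Submodule.mkQ_apply, Submodule.mapQ_apply, LinearMap.id_apply]
    rw [Submodule.Quotient.eq, Module.End.mem_eigenspace_iff, map_sub, ← Module.End.mul_apply, hσ]
    simp
  rw [LinearMap.det_eq_det_mul_det (σ.eigenspace (-1)) σ hW, hrestrict, hquot, LinearMap.det_smul,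
    LinearMap.det_id, LinearMap.det_id, mul_one, mul_one]

lemma exists_reflection_of_isCompl [FiniteDimensional K V] (h2 : (2 : K) ≠ 0)
    {U W : Submodule K V} (h : IsCompl U W) :
    ∃ ρ : End K V, ρ * ρ = 1 ∧ LinearMap.det ρ = (-1) ^ finrank K U ∧
      ∀ T : End K V, Invt T U → Invt T W → Commute ρ T := by
  set P : End K V := U.projection W h with hP
  have hidem : IsIdempotentElem P := Submodule.isIdempotentElem_projection h
  have hinv : (1 - (2 : K) • P) * (1 - (2 : K) • P) = 1 := by
    calc (1 - (2 : K) • P) * (1 - (2 : K) • P) = 1 - 4 * (P - P * P) := by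
          rw [two_smul]
          noncomm_ring
      _ = 1 := by rw [hidem.eq, sub_self, mul_zero, sub_zero]
  have heig : (1 - (2 : K) • P).eigenspace (-1) = U := by
    ext x
    rw [Module.End.mem_eigenspace_iff, ← Submodule.projection_eq_self_iff h, ← hP]
    have hsub : (1 - (2 : K) • P) x - (-1 : K) • x = (2 : K) • (x - P x) := by
      simp only [LinearMap.sub_apply, LinearMap.smul_apply, Module.End.one_apply]
      module
    rw [← sub_eq_zero, hsub, smul_eq_zero_iff_right h2, sub_eq_zero, eq_comm]
  refine ⟨1 - (2 : K) • P, hinv, ?_, fun T hU hW ↦ ?_⟩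
  · rw [det_eq_neg_one_pow_finrank_eigenspace hinv, heig]
  · have hcomm : Commute P T := by
      rw [LinearMap.IsIdempotentElem.commute_iff hidem, Submodule.range_projection,
        Submodule.ker_projection]
      exact ⟨hU, hW⟩
    exact (Commute.one_left T).sub_left (hcomm.smul_left 2)

lemma exists_apply_eq_smul_of_not_le {σ : End K V} (h2 : (2 : K) ≠ 0) (hσ : σ * σ = 1)
    {A B : Submodule K V} (hA : Invt σ A) (hAB : ¬A ≤ B) :
    ∃ s : K, s * s = 1 ∧ ∃ u ∈ A, u ∉ B ∧ σ u = s • u := by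
  obtain ⟨x, hxA, hxB⟩ := SetLike.not_le_iff_exists.mp hAB
  have hσσ : σ (σ x) = x := LinearMap.congr_fun hσ x
  by_cases hplus : x + σ x ∈ B
  · refine ⟨-1, by norm_num, x - σ x, sub_mem hxA (hA x hxA), fun hminus ↦ hxB ?_, ?_⟩
    · have hsum : (2 : K) • x = (x + σ x) + (x - σ x) := by module
      exact (B.smul_mem_iff h2).mp (hsum ▸ add_mem hplus hminus)
    · rw [map_sub, hσσ]
      module
  · refine ⟨1, one_mul 1, x + σ x, add_mem hxA (hA x hxA), hplus, ?_⟩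
    rw [map_add, hσσ, one_smul, add_comm]

end Involution

section ReversingInvolution

/-- `σ` is an involution conjugating `φ` to its inverse; the relation `σ φ σ = φ⁻¹` is written
as `φ σ φ = σ`, which needs no inverse of `φ`. -/
structure IsReversingInvolution (φ σ : End K V) : Prop where
  mul_self : σ * σ = 1
  mul_mul : φ * σ * φ = σ

variable {φ σ : End K V}

namespace IsReversingInvolution

lemma conj_mul (h : IsReversingInvolution φ σ) : σ * φ * σ * φ = 1 := by
  rw [mul_assoc (σ * φ), mul_assoc σ, ← mul_assoc φ, h.mul_mul, h.mul_self]

lemma mul_conj (h : IsReversingInvolution φ σ) : φ * (σ * φ * σ) = 1 := by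
  rw [← mul_assoc, ← mul_assoc, h.mul_mul, h.mul_self]

lemma mul_of_commute (h : IsReversingInvolution φ σ) {ρ : End K V} (hρ : ρ * ρ = 1)
    (hρφ : Commute ρ φ) (hρσ : Commute ρ σ) : IsReversingInvolution φ (σ * ρ) where
  mul_self := by rw [hρσ.mul_mul_mul_comm, h.mul_self, hρ, mul_one]
  mul_mul := by rw [← mul_assoc, mul_assoc, hρφ.eq, ← mul_assoc, h.mul_mul]

lemma exists_det_eq_neg [FiniteDimensional K V] (h : IsReversingInvolution φ σ) (h2 : (2 : K) ≠ 0)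
    {U W : Submodule K V} (hUW : IsCompl U W) (hU : Odd (finrank K U)) (hφU : Invt φ U)
    (hφW : Invt φ W) (hσU : Invt σ U) (hσW : Invt σ W) :
    ∃ τ : End K V, IsReversingInvolution φ τ ∧ LinearMap.det τ = -LinearMap.det σ := by
  obtain ⟨ρ, hρ, hdet, hcomm⟩ := exists_reflection_of_isCompl h2 hUW
  refine ⟨σ * ρ, h.mul_of_commute hρ (hcomm φ hφU hφW) (hcomm σ hσU hσW), ?_⟩
  rw [map_mul, hdet, hU.neg_one_pow, mul_neg_one]

end IsReversingInvolution

lemma exists_isReversingInvolution [FiniteDimensional K V] {φ : V ≃ₗ[K] V}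
    (hφ : ∃ α : V ≃ₗ[K] V, α * φ * α⁻¹ = φ⁻¹) :
    ∃ σ : End K V, IsReversingInvolution (φ : End K V) σ := by
  obtain ⟨α, hα⟩ := hφ
  obtain ⟨r, hr⟩ := exists_aeval_eq_of_mul_eq_one (φ := (φ : End K V)) (ψ := φ.symm)
    (LinearMap.ext φ.symm_apply_apply)
  have hsemi (x : V) : α (φ x) = φ.symm (α x) := by
    simpa only [LinearEquiv.mul_apply, LinearEquiv.coe_inv, LinearEquiv.symm_apply_apply]
      using DFunLike.congr_fun hα (α x)
  have htwist : IsTwist r (φ : End K V) (α : End K V) :=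
    ⟨α.injective, fun x ↦ by rw [hr]; exact hsemi x⟩
  have hrr : aeval (φ : End K V) (r.comp r) = φ := by
    refine LinearMap.ext fun x ↦ ?_
    obtain ⟨y, rfl⟩ := α.surjective x
    have hy := htwist.apply_aeval r y
    rw [hr] at hy
    have hy' := hsemi (φ.symm y)
    rw [φ.apply_symm_apply, φ.eq_symm_apply] at hy'
    exact hy.symm.trans hy'.symm
  obtain ⟨σ, hσ, hσφ⟩ := htwist.hasInvolutiveTwist hrr
  rw [hr] at hσφ
  exact ⟨σ, LinearMap.ext hσ, LinearMap.ext fun x ↦ φ.eq_symm_apply.mp (hσφ x)⟩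

end ReversingInvolution

section OddBlock

namespace IsReversingInvolution

variable {φ σ : End K V} {ε : K}

lemma aeval_X_sub_C_mul (h : IsReversingInvolution φ σ) (hε : ε * ε = 1) :
    aeval φ (X - C ε) * σ = -ε • (φ * σ * aeval φ (X - C ε)) := by
  simp only [map_sub, aeval_X, aeval_C, Algebra.algebraMap_eq_smul_one, sub_mul, mul_sub, h.mul_mul,
    smul_mul_assoc, mul_smul_comm, one_mul, mul_one, smul_sub, smul_smul, neg_mul, hε]
  module

lemma mul_aeval_X_sub_C (h : IsReversingInvolution φ σ) (hε : ε * ε = 1) :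
    σ * aeval φ (X - C ε) = -ε • (aeval φ (X - C ε) * σ * φ) := by
  simp only [map_sub, aeval_X, aeval_C, Algebra.algebraMap_eq_smul_one, sub_mul, mul_sub, h.mul_mul,
    smul_mul_assoc, mul_smul_comm, one_mul, mul_one, smul_sub, smul_smul, neg_mul, hε]
  module

lemma aeval_X_sub_C_pow_mul (h : IsReversingInvolution φ σ) (hε : ε * ε = 1) (j : ℕ) :
    aeval φ (X - C ε) ^ j * σ = (-ε) ^ j • (φ ^ j * σ * aeval φ (X - C ε) ^ j) := by
  induction j with
  | zero => simp
  | succ j ih =>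
    have hcomm : Commute φ (aeval φ (X - C ε)) := commute_aeval φ _
    rw [pow_succ', mul_assoc, ih, mul_smul_comm, ← mul_assoc, ← mul_assoc,
      ← (hcomm.pow_left j).eq, mul_assoc (φ ^ j), h.aeval_X_sub_C_mul hε]
    simp only [mul_smul_comm, smul_mul_assoc, smul_smul, pow_succ, mul_assoc]

lemma mul_aeval_X_sub_C_pow (h : IsReversingInvolution φ σ) (hε : ε * ε = 1) (j : ℕ) :
    σ * aeval φ (X - C ε) ^ j = (-ε) ^ j • (aeval φ (X - C ε) ^ j * σ * φ ^ j) := by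
  induction j with
  | zero => simp
  | succ j ih =>
    have hcomm : Commute φ (aeval φ (X - C ε)) := commute_aeval φ _
    rw [pow_succ, ← mul_assoc, ih, smul_mul_assoc, mul_assoc, (hcomm.pow_left j).eq,
      ← mul_assoc, mul_assoc _ σ, h.mul_aeval_X_sub_C hε]
    simp only [mul_smul_comm, smul_mul_assoc, smul_smul, pow_succ, mul_assoc]
    rw [← (Commute.self_pow φ j).eq]

lemma invt_ker_aeval_X_sub_C_pow (h : IsReversingInvolution φ σ) (hε : ε * ε = 1) (j : ℕ) :
    Invt σ (LinearMap.ker (aeval φ (X - C ε) ^ j)) := fun x hx ↦ by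
  rw [LinearMap.mem_ker] at hx ⊢
  rw [← Module.End.mul_apply, h.aeval_X_sub_C_pow_mul hε, LinearMap.smul_apply,
    Module.End.mul_apply, hx, map_zero, smul_zero]

lemma invt_range_aeval_X_sub_C_pow (h : IsReversingInvolution φ σ) (hε : ε * ε = 1) (j : ℕ) :
    Invt σ (LinearMap.range (aeval φ (X - C ε) ^ j)) := by
  rintro _ ⟨x, rfl⟩
  rw [← Module.End.mul_apply, h.mul_aeval_X_sub_C_pow hε, mul_assoc, LinearMap.smul_apply]
  exact Submodule.smul_mem _ _ ⟨_, rfl⟩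

lemma aeval_X_sub_C_pow_apply (h : IsReversingInvolution φ σ) (hε : ε * ε = 1) {m : ℕ}
    (hm : Even m) {x : V} (hx : (aeval φ (X - C ε) ^ (m + 1)) x = 0) :
    (aeval φ (X - C ε) ^ m) (σ x) = σ ((aeval φ (X - C ε) ^ m) x) := by
  set w := (aeval φ (X - C ε) ^ m) x with hw
  have hφσw : φ (σ w) = ε • σ w := by
    have hker := h.invt_ker_aeval_X_sub_C_pow hε 1 w (by rwa [pow_succ'] at hx)
    simpa [sub_eq_zero] using hker
  have hpow (j : ℕ) : (φ ^ j) (σ w) = ε ^ j • σ w := by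
    induction j with
    | zero => simp
    | succ j ih => rw [pow_succ', Module.End.mul_apply, ih, map_smul, hφσw, smul_smul, pow_succ]
  have hεm : ε ^ m = 1 := by
    obtain ⟨k, rfl⟩ := hm
    rw [← two_mul, pow_mul, pow_two, hε, one_pow]
  rw [← Module.End.mul_apply, h.aeval_X_sub_C_pow_mul hε, hm.neg_pow, hεm, one_smul,
    Module.End.mul_apply, Module.End.mul_apply, ← hw, hpow, hεm, one_smul]

lemma exists_aeval_eq_conj [FiniteDimensional K V] (h : IsReversingInvolution φ σ) :
    ∃ r : K[X], ∀ g x, σ (aeval φ g x) = aeval φ (g.comp r) (σ x) := by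
  obtain ⟨r, hr⟩ := exists_aeval_eq_of_mul_eq_one h.conj_mul
  refine ⟨r, fun g x ↦ ?_⟩
  have hsemi : Function.Semiconj σ φ (σ * φ * σ) := fun x ↦ by
    rw [← Module.End.mul_apply, ← Module.End.mul_apply, mul_assoc, h.mul_self, mul_one]
  rw [aeval_comp, hr]
  exact semiconj_aeval hsemi g x

lemma invt_cycSub [FiniteDimensional K V] (h : IsReversingInvolution φ σ) {v : V} {s : K}
    (hv : σ v = s • v) : Invt σ (cycSub φ v) := fun x hx ↦ by
  obtain ⟨r, hr⟩ := h.exists_aeval_eq_conj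
  obtain ⟨g, rfl⟩ := mem_cycSub.mp hx
  rw [hr, hv, map_smul]
  exact Submodule.smul_mem _ _ (mem_cycSub.mpr ⟨_, rfl⟩)

lemma invt_invKer [FiniteDimensional K V] (h : IsReversingInvolution φ σ) {ℓ : Dual K V} {s : K}
    (hℓ : ℓ ∘ₗ σ = s • ℓ) : Invt σ (invKer φ ℓ) := fun x hx ↦ by
  obtain ⟨r, hr⟩ := h.exists_aeval_eq_conj
  have hσσ (y : V) : σ (σ y) = y := LinearMap.congr_fun h.mul_self y
  refine mem_invKer.mpr fun g ↦ ?_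
  rw [← hσσ (aeval φ g (σ x)), hr, hσσ, ← LinearMap.comp_apply, hℓ, LinearMap.smul_apply,
    mem_invKer.mp hx, smul_zero]

lemma exists_eigenpair_of_hasJordanBlock (h : IsReversingInvolution φ σ) (h2 : (2 : K) ≠ 0)
    (hε : ε * ε = 1) {m : ℕ} (hm : Even m) (hblock : HasJordanBlock (aeval φ (X - C ε)) m) :
    ∃ (s : K) (v : V) (ℓ : Dual K V), σ v = s • v ∧ ℓ ∘ₗ σ = s • ℓ ∧
      aeval φ ((X - C ε) ^ (m + 1)) v = 0 ∧ ℓ ∘ₗ aeval φ ((X - C ε) ^ (m + 1)) = 0 ∧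
      ℓ (aeval φ ((X - C ε) ^ m) v) ≠ 0 := by
  simp only [map_pow]
  have hker := h.invt_ker_aeval_X_sub_C_pow hε
  have hrange := h.invt_range_aeval_X_sub_C_pow hε
  have hcomm {x : V} := h.aeval_X_sub_C_pow_apply hε hm (x := x)
  generalize aeval φ (X - C ε) = M at hker hrange hcomm hblock ⊢
  have hσσ (y : V) : σ (σ y) = y := LinearMap.congr_fun h.mul_self y
  have hA : Invt σ (LinearMap.ker M ⊓ LinearMap.range (M ^ m)) := fun x hx ↦
    ⟨pow_one M ▸ hker 1 x ((pow_one M).symm ▸ hx.1), hrange m x hx.2⟩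
  obtain ⟨s, hs, u, ⟨hMu, v, hv⟩, hu, hσu⟩ :=
    exists_apply_eq_smul_of_not_le h2 h.mul_self hA hblock
  obtain ⟨ℓ, hℓu, hℓ⟩ := Submodule.exists_le_ker_of_notMem hu
  have hMv : (M ^ (m + 1)) v = 0 := by rwa [pow_succ', Module.End.mul_apply, hv]
  have hMv' : (M ^ (m + 1)) (v + s • σ v) = 0 := by
    rw [map_add, map_smul, hMv, LinearMap.mem_ker.mp (hker _ v hMv), smul_zero, add_zero]
  have hu' : (M ^ m) (v + s • σ v) = (2 : K) • u := by
    rw [map_add, map_smul, hcomm hMv, hv, hσu, smul_smul, hs, one_smul, two_smul]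
  refine ⟨s, v + s • σ v, ℓ + s • ℓ ∘ₗ σ, ?_, ?_, hMv', ?_, ?_⟩
  · rw [map_add, map_smul, hσσ, smul_add, smul_smul, hs, one_smul, add_comm]
  · ext x
    simp [hσσ, ← mul_assoc, hs, add_comm]
  · ext x
    have hx : ℓ ((M ^ (m + 1)) x) = 0 := hℓ ⟨x, rfl⟩
    have hσx : ℓ (σ ((M ^ (m + 1)) x)) = 0 := hℓ (hrange _ _ ⟨x, rfl⟩)
    simp [hx, hσx]
  · have hval : (ℓ + s • ℓ ∘ₗ σ) ((M ^ m) (v + s • σ v)) = 2 * (2 * ℓ u) := by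
      simp only [hu', LinearMap.add_apply, LinearMap.smul_apply, LinearMap.comp_apply, map_smul,
        hσu, smul_eq_mul]
      linear_combination 2 * ℓ u * hs
    rw [hval]
    exact mul_ne_zero h2 (mul_ne_zero h2 hℓu)

lemma exists_det_eq_neg_of_hasJordanBlock [FiniteDimensional K V] (h : IsReversingInvolution φ σ)
    (h2 : (2 : K) ≠ 0) (hε : ε * ε = 1) {m : ℕ} (hm : Even m)
    (hblock : HasJordanBlock (aeval φ (X - C ε)) m) :
    ∃ τ : End K V, IsReversingInvolution φ τ ∧ LinearMap.det τ = -LinearMap.det σ := by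
  obtain ⟨s, v, ℓ, hσv, hℓσ, hv, hℓ, hℓv⟩ := h.exists_eigenpair_of_hasJordanBlock h2 hε hm hblock
  have hirr : Irreducible (X - C ε) := irreducible_X_sub_C ε
  have hfinrank : finrank K (cycSub φ v) = m + 1 := by
    rw [finrank_cycSub hirr hv fun hzero ↦ hℓv (by rw [hzero, map_zero]), natDegree_pow,
      natDegree_X_sub_C, mul_one]
  exact h.exists_det_eq_neg h2 (isCompl_cycSub_invKer hirr hv hℓ hℓv) (hfinrank ▸ hm.add_one)
    (Biref.invt_cycSub φ v) (Biref.invt_invKer φ ℓ) (h.invt_cycSub hσv) (h.invt_invKer hℓσ)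

end IsReversingInvolution

end OddBlock

section Signature

/-- The signature of the involution `σ` on the subspace `A`: the difference of the dimensions of
its `1`- and `(-1)`-eigenspaces in `A`. -/
noncomputable def signature (σ : End K V) (A : Submodule K V) : ℤ :=
  finrank K (A ⊓ σ.eigenspace 1 : Submodule K V) -
    finrank K (A ⊓ σ.eigenspace (-1) : Submodule K V)

lemma isCompl_eigenspace_one_neg_one {σ : End K V} (h2 : (2 : K) ≠ 0) (hσ : σ * σ = 1) :
    IsCompl (σ.eigenspace 1) (σ.eigenspace (-1)) := by
  have hσσ (x : V) : σ (σ x) = x := LinearMap.congr_fun hσ x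
  have hne : (1 : K) ≠ -1 := fun h ↦ h2 (by linear_combination h)
  refine ⟨σ.eigenspaces_iSupIndep.pairwiseDisjoint hne,
    codisjoint_iff.mpr (Submodule.eq_top_iff'.mpr fun x ↦ ?_)⟩
  have hplus : (2⁻¹ : K) • (x + σ x) ∈ σ.eigenspace 1 := by
    rw [Module.End.mem_eigenspace_iff, map_smul, map_add, hσσ, one_smul, add_comm]
  have hminus : (2⁻¹ : K) • (x - σ x) ∈ σ.eigenspace (-1) := by
    rw [Module.End.mem_eigenspace_iff, map_smul, map_sub, hσσ]
    module
  have hx : x = (2⁻¹ : K) • (x + σ x) + (2⁻¹ : K) • (x - σ x) := by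
    rw [← smul_add, add_add_sub_cancel, ← two_smul K x, inv_smul_smul₀ h2]
  rw [hx]
  exact Submodule.add_mem_sup hplus hminus

lemma two_mul_finrank_eigenspace_of_signature_top [FiniteDimensional K V] {σ : End K V}
    (h2 : (2 : K) ≠ 0) (hσ : σ * σ = 1) (hsig : signature σ ⊤ = 0) :
    2 * finrank K (σ.eigenspace (-1)) = finrank K V := by
  have hsum := Submodule.finrank_add_eq_of_isCompl (isCompl_eigenspace_one_neg_one h2 hσ)
  rw [signature, top_inf_eq, top_inf_eq] at hsig
  omega

variable {σ N : End K V}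

lemma invt_map_of_anticommute (hN : σ * N = -(N * σ)) {A : Submodule K V} (hA : Invt σ A) :
    Invt σ (A.map N) := by
  rintro _ ⟨x, hx, rfl⟩
  refine ⟨-σ x, neg_mem (hA x hx), ?_⟩
  rw [map_neg]
  exact (LinearMap.congr_fun hN x).symm

lemma map_inf_eigenspace_of_anticommute (h2 : (2 : K) ≠ 0) (hσ : σ * σ = 1)
    (hN : σ * N = -(N * σ)) {A : Submodule K V} (hA : Invt σ A) {s : K} (hs : s * s = 1) :
    (A ⊓ σ.eigenspace s).map N = A.map N ⊓ σ.eigenspace (-s) := by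
  have hσN (x : V) : σ (N x) = -N (σ x) := LinearMap.congr_fun hN x
  have hσσ (x : V) : σ (σ x) = x := LinearMap.congr_fun hσ x
  refine le_antisymm ?_ ?_
  · rintro _ ⟨x, ⟨hxA, hx⟩, rfl⟩
    refine ⟨⟨x, hxA, rfl⟩, Module.End.mem_eigenspace_iff.mpr ?_⟩
    rw [hσN, Module.End.mem_eigenspace_iff.mp hx, map_smul, neg_smul]
  · rintro _ ⟨⟨a, ha, rfl⟩, hNa⟩
    have hNσa : N (σ a) = s • N a := by
      have hσNa := Module.End.mem_eigenspace_iff.mp hNa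
      rw [hσN, neg_smul] at hσNa
      exact neg_injective hσNa
    refine ⟨(2⁻¹ : K) • (a + s • σ a), ⟨?_, Module.End.mem_eigenspace_iff.mpr ?_⟩, ?_⟩
    · exact A.smul_mem _ (add_mem ha (A.smul_mem s (hA a ha)))
    · rw [map_smul, map_add, map_smul, hσσ, smul_comm s, smul_add s, smul_smul s s, hs,
        one_smul, add_comm]
    · rw [map_smul, map_add, map_smul, hNσa, smul_smul, hs, one_smul, ← two_smul K (N a),
        inv_smul_smul₀ h2]

lemma signature_add_signature_map [FiniteDimensional K V] (h2 : (2 : K) ≠ 0) (hσ : σ * σ = 1)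
    (hN : σ * N = -(N * σ)) {A : Submodule K V} (hA : Invt σ A) :
    signature σ A + signature σ (A.map N) = signature σ (A ⊓ LinearMap.ker N) := by
  have hone := finrank_map_add_finrank_inf_ker N (A ⊓ σ.eigenspace 1)
  have hneg := finrank_map_add_finrank_inf_ker N (A ⊓ σ.eigenspace (-1))
  rw [map_inf_eigenspace_of_anticommute h2 hσ hN hA (one_mul 1), inf_right_comm] at hone
  rw [map_inf_eigenspace_of_anticommute h2 hσ hN hA (by norm_num), neg_neg, inf_right_comm] at hneg
  simp only [signature]
  omega

lemma signature_eq_zero_of_map_eq [FiniteDimensional K V] (h2 : (2 : K) ≠ 0) (hσ : σ * σ = 1)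
    (hN : σ * N = -(N * σ)) {A : Submodule K V} (hA : Invt σ A) (hmap : A.map N = A) :
    signature σ A = 0 := by
  have hker : A ⊓ LinearMap.ker N = ⊥ := by
    have hfinrank := finrank_map_add_finrank_inf_ker N A
    rw [hmap, Nat.add_eq_left] at hfinrank
    exact Submodule.finrank_eq_zero.mp hfinrank
  have hsig := signature_add_signature_map h2 hσ hN hA
  have hbot : signature σ ⊥ = 0 := by
    rw [signature, bot_inf_eq, bot_inf_eq, sub_self]
  rw [hmap, hker, hbot] at hsig
  linarith

lemma range_pow_succ_eq_map (N : End K V) (j : ℕ) :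
    LinearMap.range (N ^ (j + 1)) = (LinearMap.range (N ^ j)).map N := by
  rw [pow_succ', Module.End.mul_eq_comp, LinearMap.range_comp]

lemma invt_range_pow_of_anticommute (hN : σ * N = -(N * σ)) (j : ℕ) :
    Invt σ (LinearMap.range (N ^ j)) := by
  induction j with
  | zero => exact fun x _ ↦ ⟨σ x, rfl⟩
  | succ j ih => exact range_pow_succ_eq_map N j ▸ invt_map_of_anticommute hN ih

lemma signature_range_pow_add_two [FiniteDimensional K V] (h2 : (2 : K) ≠ 0) (hσ : σ * σ = 1)
    (hN : σ * N = -(N * σ)) {j : ℕ} (hj : ¬HasJordanBlock N j) :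
    signature σ (LinearMap.range (N ^ (j + 2))) = signature σ (LinearMap.range (N ^ j)) := by
  have hj₀ := signature_add_signature_map h2 hσ hN (invt_range_pow_of_anticommute hN j)
  have hj₁ := signature_add_signature_map h2 hσ hN (invt_range_pow_of_anticommute hN (j + 1))
  have hle : LinearMap.range (N ^ (j + 1)) ≤ LinearMap.range (N ^ j) := by
    rw [pow_succ]
    exact LinearMap.range_comp_le_range _ _
  have hker : LinearMap.range (N ^ (j + 1)) ⊓ LinearMap.ker N =
      LinearMap.range (N ^ j) ⊓ LinearMap.ker N := by
    refine le_antisymm (inf_le_inf_right _ hle) (le_inf ?_ inf_le_right)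
    rw [inf_comm]
    exact not_not.mp hj
  rw [← range_pow_succ_eq_map] at hj₀ hj₁
  rw [hker] at hj₁
  linarith

lemma signature_top_eq_zero [FiniteDimensional K V] (h2 : (2 : K) ≠ 0) (hσ : σ * σ = 1)
    (hN : σ * N = -(N * σ)) (hblock : ∀ m, Even m → ¬HasJordanBlock N m) :
    signature σ ⊤ = 0 := by
  have hconst (i : ℕ) : signature σ (LinearMap.range (N ^ (2 * i))) = signature σ ⊤ := by
    induction i with
    | zero => rw [mul_zero, pow_zero, Module.End.one_eq_id, LinearMap.range_id]
    | succ i ih =>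
      rw [← ih]
      exact signature_range_pow_add_two h2 hσ hN (hblock _ (even_two_mul i))
  obtain ⟨k, hk⟩ := Filter.eventually_atTop.mp N.eventually_iInf_range_pow_eq
  rw [← hconst k]
  refine signature_eq_zero_of_map_eq h2 hσ hN (invt_range_pow_of_anticommute hN _) ?_
  rw [← range_pow_succ_eq_map, ← hk (2 * k) (by omega), ← hk (2 * k + 1) (by omega)]

end Signature

section Criterion

/-- `φ` has a Jordan block of odd size `m + 1` whose eigenvalue `ε` is `1` or `-1`. -/
def HasOddJordanBlock (φ : End K V) : Prop :=
  ∃ (ε : K) (m : ℕ), ε * ε = 1 ∧ Even m ∧ HasJordanBlock (aeval φ (X - C ε)) m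

lemma hasOddJordanBlock_iff_edMult [FiniteDimensional K V] (φ : End K V) :
    HasOddJordanBlock φ ↔ ∃ d, Odd d ∧ (edMult φ (X - 1) d ≠ 0 ∨ edMult φ (X + 1) d ≠ 0) := by
  have hone : (X - 1 : K[X]) = X - C 1 := by rw [map_one]
  have hneg : (X + 1 : K[X]) = X - C (-1) := by rw [map_neg, map_one, sub_neg_eq_add]
  have hed (ε : K) (m : ℕ) := edMult_succ_ne_zero_iff φ (natDegree_X_sub_C ε) m
  rw [hone, hneg]
  constructor
  · rintro ⟨ε, m, hε, hm, hblock⟩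
    refine ⟨m + 1, hm.add_one, ?_⟩
    rcases mul_self_eq_one_iff.mp hε with rfl | rfl
    · exact .inl ((hed _ _).mpr hblock)
    · exact .inr ((hed _ _).mpr hblock)
  · rintro ⟨d, ⟨k, rfl⟩, hd | hd⟩
    · exact ⟨1, 2 * k, one_mul 1, even_two_mul k, (hed _ _).mp hd⟩
    · exact ⟨-1, 2 * k, by norm_num, even_two_mul k, (hed _ _).mp hd⟩

variable {φ σ : End K V}

namespace IsReversingInvolution

lemma exists_det_eq_one [FiniteDimensional K V] (h : IsReversingInvolution φ σ) (h2 : (2 : K) ≠ 0)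
    (hodd : HasOddJordanBlock φ) :
    ∃ τ : End K V, IsReversingInvolution φ τ ∧ LinearMap.det τ = 1 := by
  have hdet : LinearMap.det σ * LinearMap.det σ = 1 := by
    rw [← map_mul, h.mul_self, map_one]
  rcases mul_self_eq_one_iff.mp hdet with hdet | hdet
  · exact ⟨σ, h, hdet⟩
  · obtain ⟨ε, m, hε, hm, hblock⟩ := hodd
    obtain ⟨τ, hτ, hτdet⟩ := h.exists_det_eq_neg_of_hasJordanBlock h2 hε hm hblock
    exact ⟨τ, hτ, by rw [hτdet, hdet, neg_neg]⟩

lemma mul_sub_conj (h : IsReversingInvolution φ σ) :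
    σ * (φ - σ * φ * σ) = -((φ - σ * φ * σ) * σ) := by
  rw [mul_sub, sub_mul, mul_assoc (σ * φ), h.mul_self, mul_one, ← mul_assoc, ← mul_assoc,
    h.mul_self, one_mul, neg_sub]

lemma hasOddJordanBlock_of_sub_conj (h : IsReversingInvolution φ σ) (h2 : (2 : K) ≠ 0) {m : ℕ}
    (hm : Even m) (hblock : HasJordanBlock (φ - σ * φ * σ) m) : HasOddJordanBlock φ := by
  have hcoprime : IsCoprime (X - C 1 : K[X]) (X - C (-1)) :=
    isCoprime_X_sub_C_of_isUnit_sub (by rw [sub_neg_eq_add, one_add_one_eq_two]; exact h2.isUnit)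
  have hfactor : φ - σ * φ * σ = σ * φ * σ * aeval φ ((X - C (1 : K)) * (X - C (-1))) := by
    have hpoly : (X - C 1 : K[X]) * (X - C (-1)) = X * X - 1 := by
      rw [map_neg, map_one]; ring
    rw [hpoly, map_sub, map_mul, aeval_X, map_one, mul_sub, ← mul_assoc, h.conj_mul, one_mul,
      mul_one]
  let ψ : (End K V)ˣ := ⟨σ * φ * σ, φ, h.conj_mul, h.mul_conj⟩
  have hcomm (g : K[X]) : Commute (ψ : End K V) (aeval φ g) :=
    Commute.units_inv_left_iff.mp (commute_aeval φ g)
  rw [hfactor] at hblock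
  rcases (hblock.of_mul ψ.isUnit (hcomm _)).of_aeval_mul hcoprime with hblock | hblock
  · exact ⟨1, m, one_mul 1, hm, hblock⟩
  · exact ⟨-1, m, by norm_num, hm, hblock⟩

lemma det_eq_one_iff [FiniteDimensional K V] (h : IsReversingInvolution φ σ) (h2 : (2 : K) ≠ 0)
    (hodd : ¬HasOddJordanBlock φ) : LinearMap.det σ = 1 ↔ finrank K V % 4 ≠ 2 := by
  have hsig : signature σ ⊤ = 0 := signature_top_eq_zero h2 h.mul_self h.mul_sub_conj
    fun m hm hblock ↦ hodd (h.hasOddJordanBlock_of_sub_conj h2 hm hblock)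
  have hfinrank := two_mul_finrank_eigenspace_of_signature_top h2 h.mul_self hsig
  have hne : (-1 : K) ≠ 1 := fun hneg ↦ h2 (by linear_combination -hneg)
  rw [det_eq_neg_one_pow_finrank_eigenspace h.mul_self, neg_one_pow_eq_one_iff_even hne,
    Nat.even_iff]
  omega

end IsReversingInvolution

lemma exists_mul_involutions_iff {φ : V ≃ₗ[K] V} (hdet : LinearMap.det (φ : V →ₗ[K] V) = 1) :
    (∃ σ τ : V ≃ₗ[K] V, LinearMap.det (σ : V →ₗ[K] V) = 1 ∧ LinearMap.det (τ : V →ₗ[K] V) = 1 ∧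
        σ ^ 2 = 1 ∧ τ ^ 2 = 1 ∧ φ = σ * τ) ↔
      ∃ σ : End K V, IsReversingInvolution (φ : End K V) σ ∧ LinearMap.det σ = 1 := by
  constructor
  · rintro ⟨σ, τ, hσdet, -, hσ, hτ, rfl⟩
    have hmul : σ * τ * σ * (σ * τ) = σ := by
      rw [mul_assoc, ← mul_assoc σ σ, ← pow_two, hσ, one_mul, mul_assoc, ← pow_two, hτ, mul_one]
    exact ⟨σ, ⟨LinearMap.ext fun x ↦ DFunLike.congr_fun hσ x,
      LinearMap.ext fun x ↦ DFunLike.congr_fun hmul x⟩, hσdet⟩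
  · rintro ⟨σ, hσ, hσdet⟩
    let e : V ≃ₗ[K] V := .ofLinearMap σ σ hσ.mul_self hσ.mul_self
    have he : e ^ 2 = 1 := LinearEquiv.ext (LinearMap.congr_fun hσ.mul_self)
    have heφ : (e * φ) ^ 2 = 1 := LinearEquiv.ext (LinearMap.congr_fun hσ.conj_mul)
    refine ⟨e, e * φ, hσdet, ?_, he, heφ, ?_⟩
    · exact (map_mul LinearMap.det σ (φ : End K V)).trans (by rw [hσdet, hdet, one_mul])
    · rw [← mul_assoc, ← pow_two, he, one_mul]

end Criterion

/-- Let `φ ∈ SL(V)` be conjugate to its inverse in `GL(V)`. Then `φ` is a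
product of two involutions of `SL(V)` iff (when `dim V ≡ 2 (mod 4)`) `φ` has an elementary
divisor `(x ± 1)^d` of odd degree `d`. -/
theorem stmt19 [FiniteDimensional K V] (hK : ringChar K ≠ 2)
    (φ : V ≃ₗ[K] V) (hdet : LinearMap.det (φ : V →ₗ[K] V) = 1)
    (hrev : ∃ α : V ≃ₗ[K] V, α * φ * α⁻¹ = φ⁻¹) :
    ((Module.finrank K V % 4 = 2 →
        ∃ d : ℕ, Odd d ∧ (edMult (φ : V →ₗ[K] V) (X - 1) d ≠ 0 ∨
          edMult (φ : V →ₗ[K] V) (X + 1) d ≠ 0)) ↔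
      ∃ σ' τ' : V ≃ₗ[K] V, LinearMap.det (σ' : V →ₗ[K] V) = 1 ∧
        LinearMap.det (τ' : V →ₗ[K] V) = 1 ∧ σ' ^ 2 = 1 ∧ τ' ^ 2 = 1 ∧ φ = σ' * τ') := by
  have h2 : (2 : K) ≠ 0 := Ring.two_ne_zero hK
  obtain ⟨σ, hσ⟩ := exists_isReversingInvolution hrev
  rw [exists_mul_involutions_iff hdet, ← hasOddJordanBlock_iff_edMult]
  by_cases hodd : HasOddJordanBlock (φ : End K V)
  · exact iff_of_true (fun _ ↦ hodd) (hσ.exists_det_eq_one h2 hodd)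
  · constructor
    · exact fun hdim ↦ ⟨σ, hσ, (hσ.det_eq_one_iff h2 hodd).mpr (mt hdim hodd)⟩
    · rintro ⟨τ, hτ, hτdet⟩ hdim
      exact absurd hdim ((hτ.det_eq_one_iff h2 hodd).mp hτdet)

end Biref
end
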